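/- The quotient ring P/I is a free ℤ-module of rank 696729600. (By the main theorem of the paper, P/I is isomorphic as a graded ring to the integral cohomology ring H^*(E₈/T; ℤ) of the flag manifold E₈/T, which by the Schubert cell decomposition is free abelian of rank equal to the order 696729600 of the Weyl group W(E₈).) -/

import Mathlib

open MvPolynomial

set_option maxHeartbeats 4000000
set_option maxRecDepth 16000

noncomputable section

namespace E8T

/-- The ambient polynomial ring is `P = ℤ[t₁,…,t₈, t, γ₃, γ₄, γ₅, γ₆, γ₉, γ₁₀, γ₁₅]`,
realized as `MvPolynomial (Fin 16) ℤ` with `tᵢ = X (i-1)`, `t = X 8`,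
`γ₃ = X 9`, `γ₄ = X 10`, `γ₅ = X 11`, `γ₆ = X 12`, `γ₉ = X 13`, `γ₁₀ = X 14`,
`γ₁₅ = X 15`. -/
abbrev P := MvPolynomial (Fin 16) ℤ

def t : P := X 8
def g3 : P := X 9
def g4 : P := X 10
def g5 : P := X 11
def g6 : P := X 12
def g9 : P := X 13
def g10 : P := X 14
def g15 : P := X 15

/-- `c n` is the `n`-th elementary symmetric polynomial in `t₁,…,t₈`. -/
def c (n : ℕ) : P :=
  rename (Fin.castLE (by norm_num)) (esymm (Fin 8) ℤ n)

def rho1 : P := c 1 - 3 * t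
def rho2 : P := c 2 - 4 * t ^ 2
def rho3 : P := c 3 - 2 * g3
def rho4 : P := c 4 + 2 * t ^ 4 - 3 * g4
def rho5 : P := c 5 - 3 * t * g4 + 2 * t ^ 2 * g3 - 2 * g5
def rho6 : P := c 6 - 2 * g3 ^ 2 - t * g5 + t ^ 2 * g4 - 2 * t ^ 6 - 5 * g6
def rho8 : P :=
  -3 * c 8 + 3 * g4 ^ 2 - 2 * g3 * g5 + t * (2 * c 7 - 6 * g3 * g4)
    + t ^ 2 * (2 * g3 ^ 2 - 5 * g6) + 3 * t ^ 3 * g5 + 4 * t ^ 4 * g4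
    - 6 * t ^ 5 * g3 + t ^ 8
def rho9 : P := 2 * c 6 * g3 + t * c 8 + t ^ 2 * c 7 - 3 * t ^ 3 * c 6 - 2 * g9
def rho10 : P := g5 ^ 2 - 2 * c 7 * g3 - t ^ 2 * c 8 + 3 * t ^ 3 * c 7 - 3 * g10
def rho12 : P :=
  15 * g6 ^ 2 + 2 * g3 * g4 * g5 - 2 * c 7 * g5 + 2 * g3 ^ 4 + 10 * g3 ^ 2 * g6
    - 3 * c 8 * g4 - 2 * g4 ^ 3
    + t * (c 8 * g3 - 2 * g3 ^ 2 * g5 + 4 * c 7 * g4 + 6 * g3 * g4 ^ 2)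
    + t ^ 2 * (3 * g10 - 25 * g4 * g6 - c 7 * g3 - 16 * g3 ^ 2 * g4)
    + t ^ 3 * (25 * g3 * g6 - 3 * g4 * g5 + 10 * g3 ^ 3)
    + t ^ 4 * (3 * c 8 + 3 * g3 * g5 + 5 * g4 ^ 2)
    + t ^ 5 * (-3 * c 7 - 5 * g3 * g4)
    + 4 * t ^ 6 * g3 ^ 2 - 7 * t ^ 8 * g4 + 4 * t ^ 9 * g3
def rho14 : P :=
  c 7 ^ 2 - 3 * c 8 * g6 + 6 * g4 * g10 - 4 * c 8 * g3 ^ 2 + 6 * c 7 * g3 * g4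
    - 6 * g3 ^ 2 * g4 ^ 2 - 12 * g4 ^ 2 * g6 - 2 * g3 * g5 * g6
    + t * (24 * g3 * g4 * g6 - 8 * c 7 * g3 ^ 2 - 8 * c 7 * g6 + 4 * c 8 * g5
        - 6 * g3 * g10 + 12 * g3 ^ 3 * g4)
    + t ^ 2 * (-2 * g3 * g4 * g5 + 6 * g4 ^ 3 + 2 * g3 ^ 2 * g6 + 20 * g6 ^ 2
        - 4 * g3 ^ 4 - c 7 * g5)
    + t ^ 3 * (-12 * g3 * g4 ^ 2 + 8 * c 8 * g3 - 5 * c 7 * g4 + 3 * g5 * g6)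
    + t ^ 4 * (3 * g10 - 26 * g4 * g6 + 6 * c 7 * g3 - 4 * g3 ^ 2 * g4)
    + t ^ 5 * (24 * g3 * g6 + 3 * g4 * g5 + 12 * g3 ^ 3)
    + t ^ 6 * (-6 * c 8 + 2 * g4 ^ 2)
    - 4 * t ^ 7 * c 7 + t ^ 8 * (6 * g6 - 6 * g3 ^ 2)
    - 6 * t ^ 10 * g4 + 12 * t ^ 11 * g3 - 2 * t ^ 14
def rho15 : P :=
  (c 8 - t ^ 2 * c 6 + 2 * t ^ 3 * g5 + 3 * t ^ 4 * g4 - t ^ 8) * (c 7 - 3 * t * c 6)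
    - 2 * (g3 ^ 2 + c 6) * (g9 - c 6 * g3) - 2 * g15
def rho18 : P :=
  g9 ^ 2 - 9 * c 8 * g10 - 6 * g4 ^ 2 * g10 - 4 * g3 ^ 3 * g9 - 10 * g3 * g6 * g9
    + 2 * g3 * g5 * g10 - 2 * g3 * g4 * g5 * g6 - 6 * c 7 * g3 * g4 ^ 2
    + 3 * c 8 * g4 * g6 + c 8 * g3 ^ 2 * g4 + 6 * g3 ^ 2 * g4 ^ 3 + 12 * g4 ^ 3 * g6
    + 2 * c 7 ^ 2 * g4 + 2 * c 7 * g3 ^ 2 * g5 - 2 * g3 ^ 3 * g4 * g5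
    + 2 * c 7 * g5 * g6 + 4 * g3 ^ 6 - 10 * g6 ^ 3 + 18 * g3 ^ 4 * g6
    + 15 * g3 ^ 2 * g6 ^ 2 - 9 * c 7 * c 8 * g3
    + t * (-2 * g3 * g5 * g9 - 24 * c 7 * g4 * g6 + 8 * c 8 * g4 * g5
        + 4 * c 7 * g3 ^ 2 * g4 + 4 * c 7 * g10 - c 8 * g9 + 2 * c 7 ^ 2 * g3
        + 4 * c 8 * g3 * g6 + 12 * g3 * g4 * g10 - 36 * g3 * g4 ^ 2 * g6
        + 12 * g3 ^ 2 * g5 * g6 + c 8 * g3 ^ 3 + 6 * g3 ^ 4 * g5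
        - 18 * g3 ^ 3 * g4 ^ 2)
    + t ^ 2 * (24 * g3 ^ 4 * g4 - 2 * c 8 ^ 2 - c 7 * g9 - 11 * g3 ^ 2 * g10
        + 2 * g3 * g4 * g9 - 2 * c 8 * g3 * g5 + 16 * c 7 * g3 * g6
        - 3 * c 7 * g4 * g5 + 75 * g4 * g6 ^ 2 - 6 * g4 ^ 4 - 9 * c 8 * g4 ^ 2
        + 81 * g3 ^ 2 * g4 * g6 - 13 * g6 * g10 + 4 * g3 * g4 ^ 2 * g5
        - c 7 * g3 ^ 3)
    + t ^ 3 * (-3 * g5 * g10 - 150 * g3 * g6 ^ 2 - 135 * g3 ^ 3 * g6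
        + 6 * g3 ^ 2 * g9 - 2 * c 7 * g3 * g5 + 21 * c 7 * g4 ^ 2 + 15 * c 7 * c 8
        + 3 * g4 * g5 * g6 - 3 * g3 ^ 2 * g4 * g5 + 18 * g3 * g4 ^ 3
        + 15 * g6 * g9 + 14 * c 8 * g3 * g4 - 30 * g3 ^ 5)
    + t ^ 4 * (-13 * c 8 * g6 + 2 * g4 * g10 - 5 * c 7 ^ 2 - 33 * g3 ^ 2 * g4 ^ 2
        + 3 * g5 * g9 - 28 * g3 * g5 * g6 - 45 * g4 ^ 2 * g6 - 41 * c 7 * g3 * g4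
        - 13 * g3 ^ 3 * g5 - 9 * c 8 * g3 ^ 2)
    + t ^ 5 * (3 * c 7 * g6 - 6 * g4 ^ 2 * g5 + 23 * c 7 * g3 ^ 2
        + 105 * g3 * g4 * g6 - 6 * c 8 * g5 - 3 * g4 * g9 + 45 * g3 ^ 3 * g4)
    + t ^ 6 * (11 * g4 ^ 3 - 4 * g3 * g9 + 4 * c 7 * g5 + 9 * g3 * g4 * g5
        + 12 * g3 ^ 4 + 66 * g3 ^ 2 * g6 + 75 * g6 ^ 2 + 2 * c 8 * g4)
    + t ^ 7 * (-33 * g3 * g4 ^ 2 + 12 * g3 ^ 2 * g5 + 15 * g5 * g6)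
    + t ^ 8 * (-4 * g10 + 21 * g3 ^ 2 * g4 - 5 * c 7 * g3 - 3 * g4 * g6)
    + t ^ 9 * (6 * g9 - 42 * g3 ^ 3 - 99 * g3 * g6)
    + t ^ 10 * (-4 * c 8 - 6 * g4 ^ 2 - 13 * g3 * g5)
    + t ^ 11 * (3 * c 7 + 27 * g3 * g4)
    + t ^ 12 * (60 * g6 + 18 * g3 ^ 2)
    + 6 * t ^ 13 * g5 - 9 * t ^ 14 * g4 - 12 * t ^ 15 * g3 + 10 * t ^ 18

/-- `u = t₈`. -/
def u : P := X 7

def v : P :=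
  2 * g6 + g3 ^ 2 - u * g5 + g4 * (-t ^ 2 + u ^ 2) - u ^ 3 * g3 + t ^ 6
    - t ^ 4 * u ^ 2 + t ^ 3 * u ^ 3 + t ^ 2 * u ^ 4 - t * u ^ 5

def w : P :=
  g10 + u * g9 - u ^ 3 * c 7 - u * g4 * g5 + 2 * u ^ 2 * g4 ^ 2
    - 2 * u ^ 2 * g3 * g5
    + g3 * g4 * (-6 * t * u ^ 2 + 2 * u ^ 3)
    + g3 ^ 2 * (2 * t ^ 2 * u ^ 2 + 2 * t * u ^ 3 - 2 * u ^ 4)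
    + g6 * (-5 * t ^ 2 * u ^ 2 + 5 * t * u ^ 3)
    + g5 * (t ^ 4 * u + 3 * t ^ 3 * u ^ 2 + t ^ 2 * u ^ 3)
    + g4 * (6 * t ^ 4 * u ^ 2 - 3 * t ^ 3 * u ^ 3 - 2 * t ^ 2 * u ^ 4
        - t * u ^ 5 + u ^ 6)
    + g3 * (-6 * t ^ 5 * u ^ 2 - 2 * t ^ 4 * u ^ 3 + 4 * t ^ 3 * u ^ 4
        + 6 * t ^ 2 * u ^ 5 - 4 * t * u ^ 6 + u ^ 7)
    + 4 * t ^ 7 * u ^ 3 - 6 * t ^ 5 * u ^ 5 + 2 * t ^ 4 * u ^ 6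
    + t ^ 3 * u ^ 7 - t ^ 2 * u ^ 8

def x : P :=
  g15 - 20 * g3 * g6 ^ 2 + 3 * g3 ^ 2 * g9 - 23 * g3 ^ 3 * g6 - 6 * g3 ^ 5
    + 4 * g6 * g9 + 3 * u * g4 * g10 - u * g5 * g9 - 3 * u * g3 ^ 2 * g4 ^ 2
    + 3 * u * c 7 * g3 * g4 - 6 * u * g4 ^ 2 * g6
    + (-3 * t + 2 * u) * g3 ^ 3 * g5 + (-4 * t + 4 * u) * g3 * g5 * g6
    + (-t ^ 2 - u ^ 2) * g4 * g9 + (t ^ 2 + t * u - u ^ 2) * c 7 * g3 ^ 2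
    + (9 * t ^ 2 + 12 * t * u + 5 * u ^ 2) * g3 * g4 * g6
    + (5 * t ^ 2 + 6 * t * u + 2 * u ^ 2) * g3 ^ 3 * g4
    + (3 * t ^ 2 + 4 * t * u + u ^ 2) * c 7 * g6
    + (-6 * t ^ 3 - 2 * t ^ 2 * u - 6 * t * u ^ 2 + 5 * u ^ 3) * g3 ^ 4
    - u ^ 3 * g3 * g9
    + (3 * t ^ 2 * u + u ^ 3) * g4 ^ 3 + (2 * t ^ 2 * u + 3 * t * u ^ 2) * c 7 * g5
    + (-45 * t ^ 3 + 10 * t ^ 2 * u - 40 * t * u ^ 2) * g6 ^ 2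
    + (t ^ 3 - 2 * t ^ 2 * u + t * u ^ 2 - u ^ 3) * g3 * g4 * g5
    + (-33 * t ^ 3 + t ^ 2 * u - 31 * t * u ^ 2 + 13 * u ^ 3) * g3 ^ 2 * g6
    + (-2 * t ^ 4 - 4 * t ^ 3 * u - 3 * t * u ^ 3 + 3 * u ^ 4) * c 7 * g4
    + (-9 * t ^ 4 - 6 * t ^ 3 * u - 18 * t ^ 2 * u ^ 2 + 5 * t * u ^ 3
        - 3 * u ^ 4) * g5 * g6
    + (-3 * t ^ 4 - 3 * t ^ 3 * u - 7 * t ^ 2 * u ^ 2 + 5 * t * u ^ 3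
        - 4 * u ^ 4) * g3 ^ 2 * g5
    + (-t ^ 4 - 6 * t ^ 3 * u - t ^ 2 * u ^ 2 - 3 * t * u ^ 3) * g3 * g4 ^ 2
    + (-3 * t ^ 4 * u - 6 * t ^ 3 * u ^ 2 + 3 * t ^ 2 * u ^ 3
        + 15 * t * u ^ 4) * g10
    + (-3 * t ^ 4 * u + t ^ 3 * u ^ 2 + 5 * t ^ 2 * u ^ 3 + 10 * t * u ^ 4
        - u ^ 5) * c 7 * g3
    + (15 * t ^ 5 - 2 * t ^ 4 * u + 3 * t ^ 3 * u ^ 2 + 14 * t ^ 2 * u ^ 3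
        - 16 * t * u ^ 4 + 3 * u ^ 5) * g3 ^ 2 * g4
    + (39 * t ^ 5 - 13 * t ^ 4 * u + 8 * t ^ 3 * u ^ 2 + 35 * t ^ 2 * u ^ 3
        - 31 * t * u ^ 4 - 3 * u ^ 5) * g4 * g6
    + (t ^ 6 - t ^ 4 * u ^ 2 - t ^ 3 * u ^ 3 - t ^ 2 * u ^ 4 - t * u ^ 5
        - u ^ 6) * g9
    + (-13 * t ^ 6 + 12 * t ^ 5 * u + 5 * t ^ 4 * u ^ 2 - 56 * t ^ 3 * u ^ 3
        + 8 * t ^ 2 * u ^ 4 + 21 * t * u ^ 5 + 2 * u ^ 6) * g3 * g6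
    + (6 * t ^ 6 + 3 * t ^ 5 * u + 2 * t ^ 4 * u ^ 2 + 7 * t ^ 3 * u ^ 3
        + t ^ 2 * u ^ 4 - 8 * t * u ^ 5 + 3 * u ^ 6) * g4 * g5
    + (-8 * t ^ 6 + 6 * t ^ 5 * u + 2 * t ^ 4 * u ^ 2 - 22 * t ^ 3 * u ^ 3
        + 6 * t ^ 2 * u ^ 4 + 8 * t * u ^ 5 - 2 * u ^ 6) * g3 ^ 3
    + (-6 * t ^ 7 + t ^ 6 * u - 7 * t ^ 4 * u ^ 3 + 5 * t ^ 3 * u ^ 4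
        + 3 * t ^ 2 * u ^ 5 + 3 * t * u ^ 6 - 63 * u ^ 7) * g4 ^ 2
    + (-t ^ 7 + 2 * t ^ 6 * u + t ^ 5 * u ^ 2 - 11 * t ^ 4 * u ^ 3
        + 6 * t ^ 3 * u ^ 4 + 5 * t ^ 2 * u ^ 5 + 6 * t * u ^ 6
        + 39 * u ^ 7) * g3 * g5
    + (2 * t ^ 8 + 6 * t ^ 7 * u + 3 * t ^ 6 * u ^ 2 - 4 * t ^ 5 * u ^ 3
        - 15 * t ^ 4 * u ^ 4 + 6 * t ^ 3 * u ^ 5 + 3 * t ^ 2 * u ^ 6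
        - 40 * t * u ^ 7 + 59 * u ^ 8) * c 7
    + (3 * t ^ 8 + t ^ 6 * u ^ 2 + 11 * t ^ 5 * u ^ 3 + 14 * t ^ 4 * u ^ 4
        - 20 * t ^ 3 * u ^ 5 - 4 * t ^ 2 * u ^ 6 + 118 * t * u ^ 7
        + 3 * u ^ 8) * g3 * g4
    + (-48 * t ^ 9 + 3 * t ^ 8 * u - 41 * t ^ 7 * u ^ 2 + 18 * t ^ 6 * u ^ 3
        + 16 * t ^ 5 * u ^ 4 - 13 * t ^ 4 * u ^ 5 - 67 * t ^ 3 * u ^ 6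
        + 125 * t ^ 2 * u ^ 7 - 15 * t * u ^ 8 - 291 * u ^ 9) * g6
    + (-18 * t ^ 9 - 3 * t ^ 8 * u - 16 * t ^ 7 * u ^ 2 + 10 * t ^ 6 * u ^ 3
        - 4 * t ^ 5 * u ^ 4 - 8 * t ^ 4 * u ^ 5 - 16 * t ^ 3 * u ^ 6
        - 23 * t ^ 2 * u ^ 7 - 10 * t * u ^ 8 - 115 * u ^ 9) * g3 ^ 2
    + (-6 * t ^ 10 - 3 * t ^ 9 * u - 9 * t ^ 8 * u ^ 2 + 5 * t ^ 7 * u ^ 3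
        - 5 * t ^ 6 * u ^ 4 - 14 * t ^ 4 * u ^ 6 - 52 * t ^ 3 * u ^ 7
        + 6 * t ^ 2 * u ^ 8 - 60 * t * u ^ 9 + 117 * u ^ 10) * g5
    + (18 * t ^ 11 - 3 * t ^ 10 * u + 5 * t ^ 9 * u ^ 2 + 11 * t ^ 8 * u ^ 3
        - 28 * t ^ 7 * u ^ 4 + 8 * t ^ 6 * u ^ 5 + 20 * t ^ 5 * u ^ 6
        - 64 * t ^ 4 * u ^ 7 - 15 * t ^ 3 * u ^ 8 + 54 * t ^ 2 * u ^ 9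
        + 178 * t * u ^ 10 - 177 * u ^ 11) * g4
    + (-2 * t ^ 12 + 6 * t ^ 11 * u + 2 * t ^ 10 * u ^ 2 - 20 * t ^ 9 * u ^ 3
        + 11 * t ^ 8 * u ^ 4 + 22 * t ^ 7 * u ^ 5 - 8 * t ^ 6 * u ^ 6
        + 83 * t ^ 5 * u ^ 7 + 15 * t ^ 4 * u ^ 8 + 5 * t ^ 3 * u ^ 9
        - 116 * t ^ 2 * u ^ 10 + t * u ^ 11 + 117 * u ^ 12) * g3
    - 12 * t ^ 15 - t ^ 14 * u - 10 * t ^ 13 * u ^ 2 + 6 * t ^ 12 * u ^ 3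
    + 7 * t ^ 11 * u ^ 4 - 13 * t ^ 10 * u ^ 5 - 31 * t ^ 9 * u ^ 6
    + 9 * t ^ 8 * u ^ 7 - t ^ 7 * u ^ 8 - 118 * t ^ 6 * u ^ 9
    - 18 * t ^ 5 * u ^ 10 + 131 * t ^ 4 * u ^ 11 - 6 * t ^ 3 * u ^ 12
    - 233 * t ^ 2 * u ^ 13 + 175 * t * u ^ 14 - 58 * u ^ 15

def rho20 : P :=
  9 * u ^ 20 + 45 * u ^ 14 * v + 12 * u ^ 10 * w + 60 * u ^ 8 * v ^ 2
    + 30 * u ^ 4 * v * w + 10 * u ^ 2 * v ^ 3 + 3 * w ^ 2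

def rho24 : P :=
  11 * u ^ 24 + 60 * u ^ 18 * v + 21 * u ^ 14 * w + 105 * u ^ 12 * v ^ 2
    + 60 * u ^ 8 * v * w + 60 * u ^ 6 * v ^ 3 + 9 * u ^ 4 * w ^ 2
    + 30 * u ^ 2 * v ^ 2 * w + 5 * v ^ 4

def rho30 : P :=
  -9 * x ^ 2 - 12 * u ^ 9 * v * x - 6 * u ^ 5 * w * x + 9 * u ^ 14 * v * w
    - 10 * u ^ 12 * v ^ 3 - 3 * u ^ 10 * w ^ 2 + 30 * u ^ 8 * v ^ 2 * w
    - 35 * u ^ 6 * v ^ 4 + 6 * u ^ 4 * v * w ^ 2 - 10 * u ^ 2 * v ^ 3 * w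
    - 4 * v ^ 5 - 2 * w ^ 3

/-- The ideal of relations in the presentation `H^*(E₈/T; ℤ) ≅ P/I`. -/
def relIdeal : Ideal P :=
  Ideal.span {rho1, rho2, rho3, rho4, rho5, rho6, rho8, rho9, rho10, rho12,
    rho14, rho15, rho18, rho20, rho24, rho30}

end E8T

end



namespace E8T

/-! ### The key certificates -/

section Core

variable {F : Type*} [CommRing F]

/-- A ring homomorphism killing all the relations. -/
def Kills (φ : P →+* F) : Prop := ∀ p ∈ relIdeal, φ p = 0

/-- In the quotient, `2 x = u ^ 15`. -/
theorem cert_x (φ : P →+* F) 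
    (h6 : φ (c 6) = 2 * φ g3 ^ 2 + φ t * φ g5 - φ t ^ 2 * φ g4 + 2 * φ t ^ 6 + 5 * φ g6)
    (hu : φ (c 8) = -(φ u ^ 8 - 3 * φ t * φ u ^ 7 + 4 * φ t ^ 2 * φ u ^ 6 - 2 * φ g3 * φ u ^ 5
      + (3 * φ g4 - 2 * φ t ^ 4) * φ u ^ 4
      - (3 * φ t * φ g4 - 2 * φ t ^ 2 * φ g3 + 2 * φ g5) * φ u ^ 3
      + φ (c 6) * φ u ^ 2 - φ (c 7) * φ u))
    (h8 : φ rho8 = 0) (h9 : φ rho9 = 0) (h10 : φ rho10 = 0) (h12 : φ rho12 = 0)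
    (h14 : φ rho14 = 0) (h15 : φ rho15 = 0) : 2 * φ x = φ u ^ 15 := by
  simp only [rho8, rho9, rho10, rho12, rho14, rho15, x, map_sub, map_add, map_mul, map_neg, map_pow, map_ofNat]
    at h8 h9 h10 h12 h14 h15 ⊢
  generalize φ t = t at *
  generalize φ g3 = g3 at *
  generalize φ g4 = g4 at *
  generalize φ g5 = g5 at *
  generalize φ g6 = g6 at *
  generalize φ g9 = g9 at *
  generalize φ g10 = g10 at *
  generalize φ g15 = g15 at *
  generalize φ u = u at *
  generalize φ (c 6) = c6 at *
  generalize φ (c 7) = c7 at *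
  generalize φ (c 8) = c8 at *
  subst hu h6
  linear_combination (-39 * u ^ 7) * h8
    + (t ^ 6 + t ^ 4 * u ^ 2 + t ^ 3 * u ^ 3 + t ^ 2 * u ^ 4 + t * u ^ 5 + t * g5 + u ^ 6
      + u ^ 3 * g3 + u ^ 2 * g4 + u * g5 + g6) * h9
    + (3 * t ^ 4 * u + 4 * t ^ 3 * u ^ 2 - 3 * t ^ 2 * u ^ 3 - 10 * t * u ^ 4
      - 2 * t * u * g3) * h10
    - u ^ 3 * h12 + u * h14 - h15

/-- The element `u` is nilpotent. -/
theorem cert_u {F : Type*} [CommRing F] (u v w x : F) (hx : 2 * x = u ^ 15)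
    (h20 : 9 * u ^ 20 + 45 * u ^ 14 * v + 12 * u ^ 10 * w + 60 * u ^ 8 * v ^ 2
    + 30 * u ^ 4 * v * w + 10 * u ^ 2 * v ^ 3 + 3 * w ^ 2 = 0)
    (h24 : 11 * u ^ 24 + 60 * u ^ 18 * v + 21 * u ^ 14 * w + 105 * u ^ 12 * v ^ 2
    + 60 * u ^ 8 * v * w + 60 * u ^ 6 * v ^ 3 + 9 * u ^ 4 * w ^ 2
    + 30 * u ^ 2 * v ^ 2 * w + 5 * v ^ 4 = 0)
    (h30 : -9 * x ^ 2 - 12 * u ^ 9 * v * x - 6 * u ^ 5 * w * x + 9 * u ^ 14 * v * w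
    - 10 * u ^ 12 * v ^ 3 - 3 * u ^ 10 * w ^ 2 + 30 * u ^ 8 * v ^ 2 * w
    - 35 * u ^ 6 * v ^ 4 + 6 * u ^ 4 * v * w ^ 2 - 10 * u ^ 2 * v ^ 3 * w
    - 4 * v ^ 5 - 2 * w ^ 3 = 0) :
    u ^ 58 = 0 := by
  have h30' : -9 * u ^ 30 - 24 * u ^ 24 * v - 12 * u ^ 20 * w + 4 * (9 * u ^ 14 * v * w
      - 10 * u ^ 12 * v ^ 3 - 3 * u ^ 10 * w ^ 2 + 30 * u ^ 8 * v ^ 2 * w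
      - 35 * u ^ 6 * v ^ 4 + 6 * u ^ 4 * v * w ^ 2 - 10 * u ^ 2 * v ^ 3 * w
      - 4 * v ^ 5 - 2 * w ^ 3) = 0 := by
    linear_combination 4 * h30 + (9 * (2 * x + u ^ 15) + 24 * u ^ 9 * v + 12 * u ^ 5 * w) * hx
  linear_combination (15153512875055600 * v ^ 6 * u ^ 2 + 526037703542190527 * v ^ 5 * u ^ 8
      - 341931909022165 * v ^ 4 * w * u ^ 4 + 4746119625938157585 * v ^ 4 * u ^ 14
      + 2538750337704000 * v ^ 3 * w ^ 2 + 1627507027834286510 * v ^ 3 * w * u ^ 10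
      + 9043320711760269995 * v ^ 3 * u ^ 20 - 267108048107953350 * v ^ 2 * w ^ 2 * u ^ 6
      + 4162080477443790285 * v ^ 2 * w * u ^ 16 + 6496213228733495325 * v ^ 2 * u ^ 26
      + 20651320676703400 * v * w ^ 3 * u ^ 2 + 302493018385800975 * v * w ^ 2 * u ^ 12
      + 2279029780364910855 * v * w * u ^ 22 + 1974876448394881150 * v * u ^ 32
      - 39017735376369521 * w ^ 3 * u ^ 8 + 54553510097744892 * w ^ 2 * u ^ 18
      + 330001053672679530 * w * u ^ 28 + 212244389716445925 * u ^ 38) * h20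
    + (-11411635266502080 * v ^ 5 * u ^ 4 + 3046500405244800 * v ^ 4 * w
      - 824486025693878950 * v ^ 4 * u ^ 10 + 80892563752381530 * v ^ 3 * w * u ^ 6
      - 4727092776025774590 * v ^ 3 * u ^ 16 - 50775006754080 * v ^ 2 * w ^ 2 * u ^ 2
      - 1720903799837189430 * v ^ 2 * w * u ^ 12 - 4502968947774440295 * v ^ 2 * u ^ 22
      - 9288458933711271 * v * w ^ 2 * u ^ 8 - 1126270160753731149 * v * w * u ^ 18
      - 1530604612270057668 * v * u ^ 28 + 5322871740913899 * w ^ 3 * u ^ 4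
      + 853464718768689 * w ^ 2 * u ^ 14 - 177981049530817131 * w * u ^ 24
      - 174277724728715077 * u ^ 34) * h24
    + (5904809526127850 * v ^ 4 * u ^ 4 + 952031376639000 * v ^ 3 * w
      + 33486639362988920 * v ^ 3 * u ^ 10 + 20413317404275350 * v ^ 2 * w * u ^ 6
      + 29887345917663645 * v ^ 2 * u ^ 16 + 7744245253763775 * v * w ^ 2 * u ^ 2
      - 9979251048703140 * v * w * u ^ 12 + 5539176994229415 * v * u ^ 22
      - 8643420057610434 * w ^ 2 * u ^ 8 - 10171220562970536 * w * u ^ 18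
      - 761718285316947 * u ^ 28) * h30'

/-- First relation for `y5`, `y9`. -/
theorem cert_r10 (φ : P →+* F) (s y5 y9 : F) (h8' : φ (c 8) = 0) (h10' : φ g10 = 0)
    (h6 : φ (c 6) = 2 * φ g3 ^ 2 + φ t * φ g5 - φ t ^ 2 * φ g4 + 2 * φ t ^ 6 + 5 * φ g6)
    (h7 : φ (c 7) = s ^ 7 - 3 * φ t * s ^ 6 + 4 * φ t ^ 2 * s ^ 5 - 2 * φ g3 * s ^ 4
      + (3 * φ g4 - 2 * φ t ^ 4) * s ^ 3
      - (3 * φ t * φ g4 - 2 * φ t ^ 2 * φ g3 + 2 * φ g5) * s ^ 2 + φ (c 6) * s)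
    (hv : 2 * φ g6 + φ g3 ^ 2 - φ t ^ 2 * φ g4 + φ t ^ 6 = 0)
    (h8 : φ rho8 = 0) (h9 : φ rho9 = 0) (h10 : φ rho10 = 0)
    (hy5 : y5 = φ g5 - s * φ g4 + s ^ 2 * φ g3 + s * φ t ^ 4 - s ^ 2 * φ t ^ 3 - s ^ 3 * φ t ^ 2 + s ^ 4 * φ t)
    (hy9 : y9 = -s ^ 8 * φ t + 3 * s ^ 7 * φ t ^ 2 - 5 * s ^ 6 * φ t ^ 3 + s ^ 6 * φ g3 + 2 * s ^ 5 * φ t ^ 4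
      - 2 * s ^ 4 * φ t ^ 5 + 4 * s ^ 4 * φ t ^ 2 * φ g3 - 4 * s ^ 4 * φ t * φ g4
      + 3 * s ^ 3 * φ t ^ 2 * φ g4 + 3 * s ^ 3 * φ t * φ g5 - 2 * s ^ 3 * φ g3 ^ 2 - s ^ 3 * φ g6
      - 2 * s ^ 2 * φ t ^ 4 * φ g3 - s ^ 2 * φ t ^ 3 * φ g4 - s ^ 2 * φ t ^ 2 * φ g5
      - 2 * s ^ 2 * φ t * φ g3 ^ 2 - 5 * s ^ 2 * φ t * φ g6 + 2 * s ^ 2 * φ g3 * φ g4 - s * φ t ^ 8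
      + 2 * s * φ t ^ 4 * φ g4 - s * φ g4 ^ 2 + φ t ^ 4 * φ g5 - φ g4 * φ g5 + φ g9) :
    y5 ^ 2 - 2 * s * y9 = 0 := by
  simp only [rho8, rho9, rho10, map_sub, map_add, map_mul, map_neg, map_pow, map_ofNat]
    at h8 h9 h10
  generalize φ t = t at *
  generalize φ g3 = g3 at *
  generalize φ g4 = g4 at *
  generalize φ g5 = g5 at *
  generalize φ g6 = g6 at *
  generalize φ g9 = g9 at *
  generalize φ g10 = g10 at *
  generalize φ (c 6) = c6 at *
  generalize φ (c 7) = c7 at *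
  generalize φ (c 8) = c8 at *
  subst h7 h6 hy5 hy9 h8' h10'
  linear_combination (s ^ 4) * hv
    + (s ^ 2) * h8
    + (s) * h9
    + (1) * h10

/-- Second relation for `y5`, `y9`. -/
theorem cert_r14 (φ : P →+* F) (s y5 y9 : F) (h8' : φ (c 8) = 0) (h10' : φ g10 = 0)
    (h6 : φ (c 6) = 2 * φ g3 ^ 2 + φ t * φ g5 - φ t ^ 2 * φ g4 + 2 * φ t ^ 6 + 5 * φ g6)
    (h7 : φ (c 7) = s ^ 7 - 3 * φ t * s ^ 6 + 4 * φ t ^ 2 * s ^ 5 - 2 * φ g3 * s ^ 4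
      + (3 * φ g4 - 2 * φ t ^ 4) * s ^ 3
      - (3 * φ t * φ g4 - 2 * φ t ^ 2 * φ g3 + 2 * φ g5) * s ^ 2 + φ (c 6) * s)
    (hv : 2 * φ g6 + φ g3 ^ 2 - φ t ^ 2 * φ g4 + φ t ^ 6 = 0)
    (h9 : φ rho9 = 0) (h10 : φ rho10 = 0) (h12 : φ rho12 = 0) (h14 : φ rho14 = 0)
    (hy5 : y5 = φ g5 - s * φ g4 + s ^ 2 * φ g3 + s * φ t ^ 4 - s ^ 2 * φ t ^ 3 - s ^ 3 * φ t ^ 2 + s ^ 4 * φ t)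
    (hy9 : y9 = -s ^ 8 * φ t + 3 * s ^ 7 * φ t ^ 2 - 5 * s ^ 6 * φ t ^ 3 + s ^ 6 * φ g3 + 2 * s ^ 5 * φ t ^ 4
      - 2 * s ^ 4 * φ t ^ 5 + 4 * s ^ 4 * φ t ^ 2 * φ g3 - 4 * s ^ 4 * φ t * φ g4
      + 3 * s ^ 3 * φ t ^ 2 * φ g4 + 3 * s ^ 3 * φ t * φ g5 - 2 * s ^ 3 * φ g3 ^ 2 - s ^ 3 * φ g6
      - 2 * s ^ 2 * φ t ^ 4 * φ g3 - s ^ 2 * φ t ^ 3 * φ g4 - s ^ 2 * φ t ^ 2 * φ g5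
      - 2 * s ^ 2 * φ t * φ g3 ^ 2 - 5 * s ^ 2 * φ t * φ g6 + 2 * s ^ 2 * φ g3 * φ g4 - s * φ t ^ 8
      + 2 * s * φ t ^ 4 * φ g4 - s * φ g4 ^ 2 + φ t ^ 4 * φ g5 - φ g4 * φ g5 + φ g9) :
    s ^ 14 - 6 * s ^ 9 * y5 - 2 * y5 * y9 + 9 * s ^ 4 * y5 ^ 2 = 0 := by
  simp only [rho9, rho10, rho12, rho14, map_sub, map_add, map_mul, map_neg, map_pow, map_ofNat]
    at h9 h10 h12 h14
  generalize φ t = t at *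
  generalize φ g3 = g3 at *
  generalize φ g4 = g4 at *
  generalize φ g5 = g5 at *
  generalize φ g6 = g6 at *
  generalize φ g9 = g9 at *
  generalize φ g10 = g10 at *
  generalize φ (c 6) = c6 at *
  generalize φ (c 7) = c7 at *
  generalize φ (c 8) = c8 at *
  subst h7 h6 hy5 hy9 h8' h10'
  linear_combination (-5 * s ^ 8 + 20 * s ^ 7 * t - 28 * s ^ 6 * t ^ 2 + 16 * s ^ 5 * g3 + 16 * s ^ 4 * t ^ 4
      - 8 * s ^ 4 * t * g3 - 16 * s ^ 4 * g4 - 8 * s ^ 3 * t ^ 5 + 12 * s ^ 3 * t * g4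
      + 16 * s ^ 3 * g5 - 10 * s ^ 2 * t ^ 6 + 8 * s ^ 2 * t ^ 3 * g3 - 2 * s ^ 2 * t ^ 2 * g4
      - 8 * s ^ 2 * t * g5 - 10 * s ^ 2 * g3 ^ 2 - 20 * s ^ 2 * g6 + 8 * s * t ^ 7
      - 4 * s * t ^ 3 * g4 + 4 * s * t ^ 2 * g5 + 8 * s * t * g3 ^ 2 + 20 * s * t * g6
      + 2 * t ^ 8 - 12 * t ^ 5 * g3 + 8 * t ^ 4 * g4 + 6 * t ^ 3 * g5 + 4 * t ^ 2 * g3 ^ 2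
      - 10 * t ^ 2 * g6 - 12 * t * g3 * g4 - 4 * g3 * g5 + 6 * g4 ^ 2) * hv
    + (s ^ 4 * t - s ^ 3 * t ^ 2 - s ^ 2 * t ^ 3 + s ^ 2 * g3 + s * t ^ 4 - s * g4 + g5) * h9
    + (s ^ 4 + s ^ 2 * t ^ 2 + t ^ 4 - 2 * t * g3 + 2 * g4) * h10
    + (s ^ 2) * h12
    + (1) * h14

/-- Third relation for `y5`, `y9`. -/
theorem cert_r18 (φ : P →+* F) (s y5 y9 : F) (h8' : φ (c 8) = 0) (h10' : φ g10 = 0)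
    (h6 : φ (c 6) = 2 * φ g3 ^ 2 + φ t * φ g5 - φ t ^ 2 * φ g4 + 2 * φ t ^ 6 + 5 * φ g6)
    (h7 : φ (c 7) = s ^ 7 - 3 * φ t * s ^ 6 + 4 * φ t ^ 2 * s ^ 5 - 2 * φ g3 * s ^ 4
      + (3 * φ g4 - 2 * φ t ^ 4) * s ^ 3
      - (3 * φ t * φ g4 - 2 * φ t ^ 2 * φ g3 + 2 * φ g5) * s ^ 2 + φ (c 6) * s)
    (hv : 2 * φ g6 + φ g3 ^ 2 - φ t ^ 2 * φ g4 + φ t ^ 6 = 0)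
    (h8 : φ rho8 = 0) (h9 : φ rho9 = 0) (h10 : φ rho10 = 0) (h12 : φ rho12 = 0) (h18 : φ rho18 = 0)
    (hy5 : y5 = φ g5 - s * φ g4 + s ^ 2 * φ g3 + s * φ t ^ 4 - s ^ 2 * φ t ^ 3 - s ^ 3 * φ t ^ 2 + s ^ 4 * φ t)
    (hy9 : y9 = -s ^ 8 * φ t + 3 * s ^ 7 * φ t ^ 2 - 5 * s ^ 6 * φ t ^ 3 + s ^ 6 * φ g3 + 2 * s ^ 5 * φ t ^ 4
      - 2 * s ^ 4 * φ t ^ 5 + 4 * s ^ 4 * φ t ^ 2 * φ g3 - 4 * s ^ 4 * φ t * φ g4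
      + 3 * s ^ 3 * φ t ^ 2 * φ g4 + 3 * s ^ 3 * φ t * φ g5 - 2 * s ^ 3 * φ g3 ^ 2 - s ^ 3 * φ g6
      - 2 * s ^ 2 * φ t ^ 4 * φ g3 - s ^ 2 * φ t ^ 3 * φ g4 - s ^ 2 * φ t ^ 2 * φ g5
      - 2 * s ^ 2 * φ t * φ g3 ^ 2 - 5 * s ^ 2 * φ t * φ g6 + 2 * s ^ 2 * φ g3 * φ g4 - s * φ t ^ 8
      + 2 * s * φ t ^ 4 * φ g4 - s * φ g4 ^ 2 + φ t ^ 4 * φ g5 - φ g4 * φ g5 + φ g9) :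
    2 * (y9 ^ 2 + 10 * s ^ 3 * y5 ^ 3 - 9 * s ^ 8 * y5 ^ 2 + 2 * s ^ 13 * y5) = 0 := by
  simp only [rho8, rho9, rho10, rho12, rho18, map_sub, map_add, map_mul, map_neg, map_pow, map_ofNat]
    at h8 h9 h10 h12 h18
  generalize φ t = t at *
  generalize φ g3 = g3 at *
  generalize φ g4 = g4 at *
  generalize φ g5 = g5 at *
  generalize φ g6 = g6 at *
  generalize φ g9 = g9 at *
  generalize φ g10 = g10 at *
  generalize φ (c 6) = c6 at *
  generalize φ (c 7) = c7 at *
  generalize φ (c 8) = c8 at *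
  subst h7 h6 hy5 hy9 h8' h10'
  linear_combination (-8 * s ^ 11 * t + 12 * s ^ 10 * t ^ 2 + 24 * s ^ 9 * t ^ 3 - 20 * s ^ 9 * g3
      - 127 * s ^ 8 * t ^ 4 + 72 * s ^ 8 * t * g3 + 20 * s ^ 8 * g4 + 175 * s ^ 7 * t ^ 5
      - 66 * s ^ 7 * t ^ 2 * g3 - 76 * s ^ 7 * t * g4 - 8 * s ^ 7 * g5 - 66 * s ^ 6 * t ^ 6
      - 66 * s ^ 6 * t ^ 3 * g3 + 68 * s ^ 6 * t ^ 2 * g4 + 28 * s ^ 6 * t * g5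
      + 52 * s ^ 6 * g3 ^ 2 + 16 * s ^ 6 * g6 - 72 * s ^ 5 * t ^ 7 + 134 * s ^ 5 * t ^ 4 * g3
      + 56 * s ^ 5 * t ^ 3 * g4 + 4 * s ^ 5 * t ^ 2 * g5 - 32 * s ^ 5 * t * g3 ^ 2
      - 20 * s ^ 5 * t * g6 - 88 * s ^ 5 * g3 * g4 + 80 * s ^ 4 * t ^ 8
      - 72 * s ^ 4 * t ^ 5 * g3 - 109 * s ^ 4 * t ^ 4 * g4 - 78 * s ^ 4 * t ^ 3 * g5
      - 8 * s ^ 4 * t ^ 2 * g3 ^ 2 - 30 * s ^ 4 * t ^ 2 * g6 + 36 * s ^ 4 * t * g3 * g4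
      + 52 * s ^ 4 * g3 * g5 + 62 * s ^ 4 * g4 ^ 2 + 12 * s ^ 3 * t ^ 9
      - 42 * s ^ 3 * t ^ 6 * g3 + 31 * s ^ 3 * t ^ 5 * g4 + 58 * s ^ 3 * t ^ 4 * g5
      + 32 * s ^ 3 * t ^ 3 * g3 ^ 2 + 100 * s ^ 3 * t ^ 3 * g6 + 106 * s ^ 3 * t ^ 2 * g3 * g4
      - 96 * s ^ 3 * t * g4 ^ 2 - 40 * s ^ 3 * g3 ^ 3 - 80 * s ^ 3 * g3 * g6
      - 52 * s ^ 3 * g4 * g5 - 38 * s ^ 2 * t ^ 10 + 12 * s ^ 2 * t ^ 7 * g3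
      + 61 * s ^ 2 * t ^ 6 * g4 - 11 * s ^ 2 * t ^ 5 * g5 - 10 * s ^ 2 * t ^ 4 * g3 ^ 2
      - 75 * s ^ 2 * t ^ 4 * g6 - 90 * s ^ 2 * t ^ 3 * g3 * g4 - 4 * s ^ 2 * t ^ 2 * g3 * g5
      + 32 * s ^ 2 * t ^ 2 * g4 ^ 2 + 12 * s ^ 2 * t * g4 * g5 + 8 * s ^ 2 * t * g9
      + 40 * s ^ 2 * g3 ^ 2 * g4 + 80 * s ^ 2 * g4 * g6 + 20 * s ^ 2 * g5 ^ 2 + 12 * s * t ^ 11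
      - 8 * s * t ^ 8 * g3 - 27 * s * t ^ 7 * g4 + 5 * s * t ^ 6 * g5 + 42 * s * t ^ 5 * g3 ^ 2
      - 15 * s * t ^ 5 * g6 - 68 * s * t ^ 4 * g3 * g4 - 8 * s * t ^ 3 * g3 * g5
      + 42 * s * t ^ 3 * g4 ^ 2 + 24 * s * t ^ 2 * g3 ^ 3 + 100 * s * t ^ 2 * g3 * g6
      + 4 * s * t ^ 2 * g4 * g5 - 2 * s * t ^ 2 * g9 - 24 * s * t * g3 ^ 2 * g4
      - 120 * s * t * g4 * g6 + 4 * s * t * g5 ^ 2 - 8 * s * g3 ^ 2 * g5 - 12 * s * g3 * g4 ^ 2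
      - 20 * s * g5 * g6 + 20 * t ^ 12 - 24 * t ^ 9 * g3 + 2 * t ^ 8 * g4 + 16 * t ^ 6 * g3 ^ 2
      + 80 * t ^ 6 * g6 + 30 * t ^ 5 * g3 * g4 - 18 * t ^ 4 * g3 * g5 - 10 * t ^ 4 * g4 ^ 2
      - 60 * t ^ 3 * g3 ^ 3 - 150 * t ^ 3 * g3 * g6 + 18 * t ^ 3 * g4 * g5
      + 56 * t ^ 2 * g3 ^ 2 * g4 + 70 * t ^ 2 * g4 * g6 - 4 * t ^ 2 * g5 ^ 2
      + 12 * t * g3 ^ 2 * g5 - 36 * t * g3 * g4 ^ 2 + 8 * g3 ^ 4 + 20 * g3 ^ 2 * g6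
      - 12 * g3 * g4 * g5 + 12 * g4 ^ 3 - 10 * g6 ^ 2) * hv
    + (2 * s ^ 10 - 4 * s ^ 9 * t + 3 * s ^ 8 * t ^ 2 + 11 * s ^ 7 * t ^ 3 - 8 * s ^ 7 * g3
      - 16 * s ^ 6 * t ^ 4 + 8 * s ^ 6 * t * g3 + 4 * s ^ 6 * g4 + 16 * s ^ 5 * t ^ 5
      - 14 * s ^ 5 * t ^ 2 * g3 + 4 * s ^ 5 * t * g4 - 4 * s ^ 5 * g5 - 8 * s ^ 4 * t ^ 3 * g3
      - s ^ 4 * t ^ 2 * g4 - 4 * s ^ 4 * t * g5 + 6 * s ^ 4 * g3 ^ 2 + 6 * s ^ 3 * t ^ 4 * g3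
      + 3 * s ^ 3 * t ^ 3 * g4 + 2 * s ^ 3 * t ^ 2 * g5 + 8 * s ^ 3 * t * g3 ^ 2
      + 16 * s ^ 3 * t * g6 - 8 * s ^ 3 * g3 * g4 + 12 * s ^ 2 * t ^ 5 * g3
      - 15 * s ^ 2 * t ^ 4 * g4 - 7 * s ^ 2 * t ^ 3 * g5 - 6 * s ^ 2 * t ^ 2 * g3 ^ 2
      + 5 * s ^ 2 * t ^ 2 * g6 + 12 * s ^ 2 * t * g3 * g4 + 4 * s ^ 2 * g3 * g5
      - 2 * s ^ 2 * g4 ^ 2 + 3 * s * t ^ 5 * g4 - s * t ^ 4 * g5 + 3 * s * t ^ 3 * g6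
      - 2 * s * t ^ 2 * g3 * g4 - 2 * s * t * g3 * g5 - 2 * s * g3 * g6 + 4 * s * g4 * g5
      - 2 * s * g9) * h8
    + (2 * s ^ 6 * t ^ 3 - 2 * s ^ 6 * g3 - 4 * s ^ 5 * t ^ 4 + 4 * s ^ 5 * t * g3
      + 8 * s ^ 4 * t ^ 5 - 8 * s ^ 4 * t ^ 2 * g3 + 2 * s ^ 4 * t * g4
      - 4 * s ^ 3 * t ^ 3 * g3 - 2 * s ^ 3 * t * g5 + 4 * s ^ 3 * g3 ^ 2 + 2 * s ^ 3 * g6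
      + 4 * s ^ 2 * t ^ 4 * g3 + 4 * s ^ 2 * t * g3 ^ 2 + 8 * s ^ 2 * t * g6
      - 4 * s ^ 2 * g3 * g4 + 6 * s * t ^ 5 * g3 - 7 * s * t ^ 4 * g4 - 3 * s * t ^ 3 * g5
      - 3 * s * t ^ 2 * g3 ^ 2 + 3 * s * t ^ 2 * g6 + 6 * s * t * g3 * g4 + 2 * s * g3 * g5
      - s * g4 ^ 2 - 2 * t ^ 4 * g5 + 2 * g4 * g5 - 2 * g9) * h9
    + (-2 * s ^ 8 + 6 * s ^ 6 * t ^ 2 - 16 * s ^ 5 * t ^ 3 + 4 * s ^ 5 * g3 + 8 * s ^ 4 * t * g3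
      - 4 * s ^ 4 * g4 + 4 * s ^ 3 * t ^ 5 + 4 * s ^ 3 * t ^ 2 * g3 - 12 * s ^ 3 * t * g4
      + 4 * s ^ 3 * g5 - 8 * s ^ 2 * t ^ 3 * g3 + 12 * s ^ 2 * t ^ 2 * g4 + 8 * s ^ 2 * t * g5
      - 4 * s ^ 2 * g3 ^ 2 - 8 * s ^ 2 * g6 - 4 * s * t ^ 3 * g4 - 4 * s * t * g6
      + 4 * t ^ 5 * g3 - 2 * t ^ 4 * g4 + 4 * t ^ 2 * g3 ^ 2 + 8 * t ^ 2 * g6 - 4 * t * g3 * g4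
      + 2 * g4 ^ 2) * h10
    + (-2 * s ^ 6 + 4 * s ^ 5 * t - 4 * s ^ 4 * t ^ 2 - 4 * s ^ 3 * t ^ 3 + 4 * s ^ 3 * g3
      + 4 * s ^ 2 * t ^ 4 - 4 * s ^ 2 * g4 + 4 * s * g5) * h12
    + (-2) * h18

end Core

end E8T

namespace E8T

section Core2

variable {F : Type*} [CommRing F]

theorem map_c (φ : P →+* F) (n : ℕ) :
    φ (c n) = ((Finset.univ : Finset (Fin 8)).val.map
      (fun j => φ (X (Fin.castLE (by norm_num) j)))).esymm n := by
  have h1 : φ (c n) = (MvPolynomial.aeval (R := ℤ)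
      (fun j : Fin 8 => φ (X (Fin.castLE (by norm_num) j)))) (esymm (Fin 8) ℤ n) := by
    have : (φ.comp (rename (Fin.castLE (by norm_num : 8 ≤ 16)) :
        MvPolynomial (Fin 8) ℤ →ₐ[ℤ] P).toRingHom) = (MvPolynomial.aeval (R := ℤ)
      (fun j : Fin 8 => φ (X (Fin.castLE (by norm_num) j)))).toRingHom := by
      apply MvPolynomial.ringHom_ext
      · intro r; simp
      · intro i; simp
    exact congrArg (fun f => f (esymm (Fin 8) ℤ n)) this
  rw [h1, MvPolynomial.aeval_esymm_eq_multiset_esymm]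

/-- Each `t_j` is a root of the polynomial with coefficients `± c_i`. -/
theorem root (φ : P →+* F) (j : Fin 8) (s : F) (hs : s = φ (X (Fin.castLE (by norm_num) j))) :
    s ^ 8 - φ (c 1) * s ^ 7 + φ (c 2) * s ^ 6 - φ (c 3) * s ^ 5 + φ (c 4) * s ^ 4
      - φ (c 5) * s ^ 3 + φ (c 6) * s ^ 2 - φ (c 7) * s + φ (c 8) = 0 := by
  have h := congrArg (Polynomial.eval s) (Multiset.prod_X_sub_X_eq_sum_esymm
    ((Finset.univ : Finset (Fin 8)).val.map
      (fun j => φ (X (Fin.castLE (by norm_num) j)))))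
  have h0 : Polynomial.eval s (Multiset.map (fun t => Polynomial.X - Polynomial.C t)
      ((Finset.univ : Finset (Fin 8)).val.map
      (fun j => φ (X (Fin.castLE (by norm_num) j))))).prod = 0 := by
    rw [Polynomial.eval_multiset_prod]
    apply Multiset.prod_eq_zero
    rw [Multiset.mem_map]
    refine ⟨Polynomial.X - Polynomial.C s, ?_, by simp⟩
    rw [Multiset.mem_map]
    refine ⟨s, ?_, rfl⟩
    rw [Multiset.mem_map]
    exact ⟨j, by simp, hs.symm⟩
  rw [h0] at h
  simp only [map_c φ]
  have hcard : Multiset.card ((Finset.univ : Finset (Fin 8)).val.map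
      (fun j => φ (X (Fin.castLE (by norm_num) j)))) = 8 := by simp
  generalize ((Finset.univ : Finset (Fin 8)).val.map
      (fun j => φ (X (Fin.castLE (by norm_num) j)))) = M at h hcard ⊢
  rw [hcard] at h
  have he0 : M.esymm 0 = 1 := by simp [Multiset.esymm]
  simp only [Finset.sum_range_succ, Finset.sum_range_zero, Polynomial.eval_add,
    Polynomial.eval_mul, Polynomial.eval_pow, Polynomial.eval_neg, Polynomial.eval_one,
    Polynomial.eval_X, Polynomial.eval_C, he0, Polynomial.eval_zero] at h
  norm_num at h
  linear_combination -h

theorem c_zero (φ : P →+* F) (h : ∀ j : Fin 8, φ (X (Fin.castLE (by norm_num) j)) = 0)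
    (n : ℕ) (hn : n ≠ 0) : φ (c n) = 0 := by
  rw [map_c]
  simp only [h]
  rw [Multiset.map_const']
  unfold Multiset.esymm
  apply Multiset.sum_eq_zero
  intro y hy
  rw [Multiset.mem_map] at hy
  obtain ⟨m, hm, rfl⟩ := hy
  rw [Multiset.mem_powersetCard] at hm
  obtain ⟨k, hk⟩ : ∃ a, a ∈ m := Multiset.exists_mem_of_ne_zero (by
    rintro rfl
    exact hn (by simpa using hm.2.symm))
  have := Multiset.eq_of_mem_replicate (Multiset.mem_of_le hm.1 hk)
  exact Multiset.prod_eq_zero (this ▸ hk)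

/-- The final elimination for the roots. -/
theorem cert_s [IsDomain F] (s y5 y9 : F) (h10 : y5 ^ 2 - 2 * s * y9 = 0)
    (h14 : s ^ 14 - 6 * s ^ 9 * y5 - 2 * y5 * y9 + 9 * s ^ 4 * y5 ^ 2 = 0)
    (h18 : 2 * (y9 ^ 2 + 10 * s ^ 3 * y5 ^ 3 - 9 * s ^ 8 * y5 ^ 2 + 2 * s ^ 13 * y5) = 0) :
    s = 0 := by
  have hf : y5 ^ 3 - 9 * s ^ 5 * y5 ^ 2 + 6 * s ^ 10 * y5 - s ^ 15 = 0 := by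
    linear_combination (-s) * h14 + y5 * h10
  by_cases h2 : (2 : F) = 0
  · have hy : y5 = 0 := by
      have : y5 ^ 2 = 0 := by linear_combination h10 + s * y9 * h2
      exact pow_eq_zero_iff (two_ne_zero) |>.1 this
    subst hy
    have : s ^ 15 = 0 := by linear_combination -hf
    exact pow_eq_zero_iff (by norm_num) |>.1 this
  · have h18' := (mul_eq_zero.1 h18).resolve_left h2
    have hg : y5 ^ 4 + 40 * s ^ 5 * y5 ^ 3 - 36 * s ^ 10 * y5 ^ 2 + 8 * s ^ 15 * y5 = 0 := by
      linear_combination 4 * s ^ 2 * h18' + (y5 ^ 2 + 2 * s * y9) * h10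
    have : s ^ 30 = 0 := by
      linear_combination -(s ^ 15 + 123070 * y5 * s ^ 10 - 264993 * y5 ^ 2 * s ^ 5
        - 6555 * y5 ^ 3) * hf
        - (15383 * s ^ 10 - 56202 * y5 * s ^ 5 + 6555 * y5 ^ 2) * hg
    exact pow_eq_zero_iff (by norm_num) |>.1 this

theorem eq_zero_of_23 [IsDomain F] {a : F} (m n : ℕ) (h2 : 2 * a ^ (m+1) = 0) (h3 : 3 * a ^ (n+1) = 0) :
    a = 0 := by
  by_contra ha
  have h2' := (mul_eq_zero.1 h2).resolve_right (pow_ne_zero _ ha)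
  have h3' := (mul_eq_zero.1 h3).resolve_right (pow_ne_zero _ ha)
  exact one_ne_zero (α := F) (by linear_combination h3' - h2')

/-- The core of the argument: the only point of the zero locus over a domain is the origin. -/
theorem core [IsDomain F] (φ : P →+* F) (hφ : ∀ p ∈ relIdeal, φ p = 0) (i : Fin 16) :
    φ (X i) = 0 := by
  have hm : ∀ p ∈ ({rho1, rho2, rho3, rho4, rho5, rho6, rho8, rho9, rho10, rho12,
    rho14, rho15, rho18, rho20, rho24, rho30} : Set P), φ p = 0 :=
    fun p hp => hφ p (Ideal.subset_span hp)
  have h1 : φ rho1 = 0 := hm _ (by simp)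
  have h2 : φ rho2 = 0 := hm _ (by simp)
  have h3 : φ rho3 = 0 := hm _ (by simp)
  have h4 : φ rho4 = 0 := hm _ (by simp)
  have h5 : φ rho5 = 0 := hm _ (by simp)
  have h6 : φ rho6 = 0 := hm _ (by simp)
  have h8 : φ rho8 = 0 := hm _ (by simp)
  have h9 : φ rho9 = 0 := hm _ (by simp)
  have h10 : φ rho10 = 0 := hm _ (by simp)
  have h12 : φ rho12 = 0 := hm _ (by simp)
  have h14 : φ rho14 = 0 := hm _ (by simp)
  have h15 : φ rho15 = 0 := hm _ (by simp)
  have h18 : φ rho18 = 0 := hm _ (by simp)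
  have h20 : φ rho20 = 0 := hm _ (by simp)
  have h24 : φ rho24 = 0 := hm _ (by simp)
  have h30 : φ rho30 = 0 := hm _ (by simp)
  clear hm hφ
  simp only [rho1, rho2, rho3, rho4, rho5, rho6, map_sub, map_add, map_mul, map_pow,
    map_ofNat] at h1 h2 h3 h4 h5 h6
  have e1 : φ (c 1) = 3 * φ t := by linear_combination h1
  have e2 : φ (c 2) = 4 * φ t ^ 2 := by linear_combination h2
  have e3 : φ (c 3) = 2 * φ g3 := by linear_combination h3
  have e4 : φ (c 4) = 3 * φ g4 - 2 * φ t ^ 4 := by linear_combination h4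
  have e5 : φ (c 5) = 3 * φ t * φ g4 - 2 * φ t ^ 2 * φ g3 + 2 * φ g5 := by linear_combination h5
  have e6 : φ (c 6) = 2 * φ g3 ^ 2 + φ t * φ g5 - φ t ^ 2 * φ g4 + 2 * φ t ^ 6 + 5 * φ g6 := by
    linear_combination h6
  have ru := root φ 7 (φ u) rfl
  rw [e1, e2, e3, e4, e5] at ru
  have hx := cert_x φ e6 (by linear_combination ru) h8 h9 h10 h12 h14 h15
  simp only [rho20, rho24, rho30, map_sub, map_add, map_mul, map_neg, map_pow,
    map_ofNat] at h20 h24 h30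
  have hu : φ u = 0 :=
    pow_eq_zero_iff (n := 58) (by norm_num) |>.1 (cert_u _ _ _ _ hx h20 h24 h30)
  have hc8 : φ (c 8) = 0 := by rw [hu] at ru; linear_combination ru
  rw [hu] at hx h20 h24 h30
  have hw : φ w = 0 := by
    have e20 : 3 * φ w ^ 2 = 0 := by linear_combination h20
    have e24 : 5 * φ v ^ 4 = 0 := by linear_combination h24
    rcases mul_eq_zero.1 e20 with k | k
    · -- characteristic three
      have hv : φ v = 0 := by
        rcases mul_eq_zero.1 e24 with k' | k'
        · exact absurd (by linear_combination 2 * k - k' : (1 : F) = 0) one_ne_zero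
        · exact pow_eq_zero_iff (by norm_num) |>.1 k'
      have : φ w ^ 3 = 0 := by
        rw [hv] at h30
        linear_combination h30 + (3 * φ x ^ 2 + φ w ^ 3) * k
      exact pow_eq_zero_iff (by norm_num) |>.1 this
    · exact pow_eq_zero_iff (by norm_num) |>.1 k
  have hv : φ v = 0 := by
    have e24 : 5 * φ v ^ 4 = 0 := by rw [hw] at h24; linear_combination h24
    rcases mul_eq_zero.1 e24 with k' | k'
    · rw [hw] at h30
      have : φ v ^ 5 = 0 := by
        linear_combination h30 + (φ v ^ 5 + φ x ^ 2) * k' + 2 * φ x * hx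
      exact pow_eq_zero_iff (by norm_num) |>.1 this
    · exact pow_eq_zero_iff (by norm_num) |>.1 k'
  have hx0 : φ x = 0 := by
    rw [hw, hv] at h30
    have : φ x ^ 2 = 0 := by linear_combination h30 + 5 * φ x * hx
    exact pow_eq_zero_iff (by norm_num) |>.1 this
  have hg10 : φ g10 = 0 := by
    simp only [w, map_sub, map_add, map_mul, map_neg, map_pow, map_ofNat, hu] at hw
    linear_combination hw
  have hv' : 2 * φ g6 + φ g3 ^ 2 - φ t ^ 2 * φ g4 + φ t ^ 6 = 0 := by
    simp only [v, map_sub, map_add, map_mul, map_neg, map_pow, map_ofNat, hu] at hv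
    linear_combination hv
  have hs : ∀ j : Fin 8, φ (X (Fin.castLE (by norm_num) j)) = 0 := by
    intro j
    obtain ⟨s, hs⟩ : ∃ s, s = φ (X (Fin.castLE (by norm_num) j)) := ⟨_, rfl⟩
    rw [← hs]
    by_contra hne
    have rs := root φ j s hs
    rw [e1, e2, e3, e4, e5, hc8] at rs
    have h7 : φ (c 7) = s ^ 7 - 3 * φ t * s ^ 6 + 4 * φ t ^ 2 * s ^ 5 - 2 * φ g3 * s ^ 4
      + (3 * φ g4 - 2 * φ t ^ 4) * s ^ 3
      - (3 * φ t * φ g4 - 2 * φ t ^ 2 * φ g3 + 2 * φ g5) * s ^ 2 + φ (c 6) * s := by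
      apply mul_left_cancel₀ hne
      linear_combination -rs
    exact hne (cert_s s _ _ (cert_r10 φ s _ _ hc8 hg10 e6 h7 hv' h8 h9 h10 rfl rfl)
      (cert_r14 φ s _ _ hc8 hg10 e6 h7 hv' h9 h10 h12 h14 rfl rfl)
      (cert_r18 φ s _ _ hc8 hg10 e6 h7 hv' h8 h9 h10 h12 h18 rfl rfl))
  have hc := c_zero φ hs
  have ht : φ t = 0 := by
    rw [hc _ (by norm_num)] at e1 e2
    have : φ t ^ 2 = 0 := by linear_combination -e2 + φ t * e1
    exact pow_eq_zero_iff (by norm_num) |>.1 this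
  rw [hc _ (by norm_num)] at e3 e4 e5 e6
  rw [ht] at e4 e5 e6 hv'
  have hg3 : φ g3 = 0 := by
    have : φ g3 ^ 2 = 0 := by linear_combination 5 * hv' + 2 * e6 
    exact pow_eq_zero_iff (by norm_num) |>.1 this
  rw [hg3] at e5 e6 hv'
  have hg6 : φ g6 = 0 := by linear_combination -e6 - 2 * hv'
  simp only [rho12, rho10, rho18, map_sub, map_add, map_mul, map_neg, map_pow,
    map_ofNat, hc _ (show (7 : ℕ) ≠ 0 by norm_num), ht, hg3, hg6, hg10, hc8] at h12 h10 h18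
  have hg5 : φ g5 = 0 := pow_eq_zero_iff (n := 2) (by norm_num) |>.1 (by linear_combination h10)
  have hg4 : φ g4 = 0 := eq_zero_of_23 2 0 (by linear_combination -h12) (by linear_combination -e4)
  rw [hg4, hg5] at h18
  have hg9 : φ g9 = 0 := pow_eq_zero_iff (n := 2) (by norm_num) |>.1 (by linear_combination h18)
  have hg15 : φ g15 = 0 := by
    simp only [x, map_sub, map_add, map_mul, map_neg, map_pow, map_ofNat, hu, ht, hg3, hg4,
      hg5, hg6, hg9, hg10, hc _ (show (7 : ℕ) ≠ 0 by norm_num)] at hx0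
    linear_combination hx0
  fin_cases i
  · exact hs 0
  · exact hs 1
  · exact hs 2
  · exact hs 3
  · exact hs 4
  · exact hs 5
  · exact hs 6
  · exact hs 7
  · exact ht
  · exact hg3
  · exact hg4
  · exact hg5
  · exact hg6
  · exact hg9
  · exact hg10
  · exact hg15

end Core2

end E8T

namespace E8T
section CM
open RingTheory.Sequence CategoryTheory Abelian Limits Pointwise IsSMulRegular IsLocalRing

/-- The length of a regular sequence bounds the dimension of every associated prime. -/
theorem length_le_dim {R : Type} [CommRing R] [IsNoetherianRing R] [IsLocalRing R]
    (rs : List R) : ∀ (M : Type) [AddCommGroup M] [Module R M] [Module.Finite R M]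
    (_ : ∀ r ∈ rs, r ∈ maximalIdeal R) (_ : IsRegular M rs) (Q : Ideal R)
    (_ : IsAssociatedPrime Q M), ((rs.length : ℕ) : WithBot ℕ∞) ≤ ringKrullDim (R ⧸ Q) := by
  induction rs with
  | nil =>
    intro M _ _ _ _ _ Q hQ
    have := hQ.isPrime
    simp only [List.length_nil, Nat.cast_zero]
    exact ringKrullDim_nonneg_of_nontrivial
  | cons a rs ih =>
    intro M _ _ _ hmem hreg Q hQ
    have hQp := hQ.isPrime
    rw [isRegular_cons_iff] at hreg
    obtain ⟨ha, hreg⟩ := hreg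
    obtain ⟨x, hx⟩ := (isAssociatedPrime_iff.mp hQ).2
    have haM : a ∈ maximalIdeal R := hmem a (by simp)
    have hx0 : x ≠ 0 := by
      rintro rfl
      apply hQp.ne_top
      rw [hx]; simp
    let U : Submodule R M :=
      { carrier := {m | ∀ p ∈ Q, p • m = 0}
        add_mem' := fun {a b} h1 h2 p hp => by rw [smul_add, h1 p hp, h2 p hp, add_zero]
        zero_mem' := fun p _ => smul_zero p
        smul_mem' := fun r m h p hp => by rw [smul_comm, h p hp, smul_zero] }
    have hxU : x ∈ U := by
      intro p hp
      rw [hx, Submodule.mem_colon_singleton] at hp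
      simpa using hp
    have hex : ∃ y ∈ U, y ∉ (a • (⊤ : Submodule R M)) := by
      by_contra hcon
      push Not at hcon
      have hU : U ≤ (Ideal.span {a}) • U := by
        intro y hy
        obtain ⟨z, -, hz⟩ := hcon y hy
        have hz' : a • z = y := hz
        rw [← hz']
        refine Submodule.smul_mem_smul (Ideal.mem_span_singleton_self a) ?_
        intro p hp
        apply ha
        have := hy p hp
        rw [← hz', smul_comm] at this
        simpa using this
      have hbot := Submodule.eq_bot_of_le_smul_of_le_jacobson_bot (Ideal.span {a}) U
        (IsNoetherian.noetherian U) hU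
        ((Ideal.span_singleton_le_iff_mem _).mpr (by
          rw [IsLocalRing.jacobson_eq_maximalIdeal ⊥ bot_ne_top]; exact haM))
      rw [hbot] at hxU
      exact hx0 (by simpa using hxU)
    obtain ⟨y, hyU, hy⟩ := hex
    have hy0 : (Submodule.Quotient.mk y : QuotSMulTop a M) ≠ 0 := by
      rwa [Ne, Submodule.Quotient.mk_eq_zero]
    obtain ⟨Q', hQ', hle⟩ := exists_le_isAssociatedPrime_of_isNoetherianRing R _ hy0
    have hQQ' : Q ≤ Q' := by
      intro p hp
      apply hle
      rw [Submodule.mem_colon_singleton, ← Submodule.Quotient.mk_smul, hyU p hp]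
      simp
    have haQ' : a ∈ Q' := by
      apply hle
      rw [Submodule.mem_colon_singleton, ← Submodule.Quotient.mk_smul, Submodule.mem_bot,
        Submodule.Quotient.mk_eq_zero]
      exact Submodule.smul_mem_pointwise_smul y a ⊤ trivial
    have haQ : a ∉ Q := by
      intro h
      rw [hx, Submodule.mem_colon_singleton] at h
      apply hx0
      apply ha
      simpa using h
    have h1 := ih (QuotSMulTop a M) (fun r hr => hmem r (by simp [hr])) hreg Q' hQ'
    have h2 : ringKrullDim (R ⧸ Q') + 1 ≤ ringKrullDim (R ⧸ Q) := by
      refine ringKrullDim_succ_le_of_surjective (Ideal.Quotient.factor hQQ')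
        (Ideal.Quotient.factor_surjective hQQ') (r := Ideal.Quotient.mk Q a) ?_ ?_
      · apply mem_nonZeroDivisors_of_ne_zero
        rwa [Ne, Ideal.Quotient.eq_zero_iff_mem]
      · simpa [Ideal.Quotient.eq_zero_iff_mem] using haQ'
    refine le_trans ?_ h2
    rw [List.length_cons, Nat.cast_succ]
    gcongr

/-- Cohen-Macaulay type claim. -/
theorem weaklyRegular_of_ext {R : Type} [CommRing R] [IsNoetherianRing R] [IsLocalRing R]
    (N : ModuleCat.{0} R) [Module.Finite R N]
    (hN : Module.support R N = PrimeSpectrum.zeroLocus (maximalIdeal R : Set R))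
    (fs : List R) : ∀ (M : ModuleCat.{0} R) [Module.Finite R M] [Nontrivial M]
    (_ : ∀ i < fs.length, Subsingleton (Ext N M i))
    (_ : ∀ f ∈ fs, f ∈ maximalIdeal R)
    (_ : ∀ Q : Ideal R, Q.IsPrime → Module.annihilator R M ≤ Q → (∀ f ∈ fs, f ∈ Q) →
      Q.IsMaximal), IsWeaklyRegular M fs := by
  classical
  induction fs with
  | nil => intro M _ _ _ _ _; simp
  | cons f fs ih =>
    intro M _ _ hext hmem hmax
    have hjac : (maximalIdeal R) ≤ (Module.annihilator R M).jacobson :=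
      IsLocalRing.maximalIdeal_le_jacobson _
    have smul_lt : (maximalIdeal R) • (⊤ : Submodule R M) < ⊤ :=
      (Submodule.top_ne_ideal_smul_of_le_jacobson_annihilator hjac).symm.lt_top
    have hf : IsSMulRegular M f := by
      by_contra hcon
      have h1 : f ∈ ⋃ p ∈ associatedPrimes R M, (p : Set R) := by
        rw [biUnion_associatedPrimes_eq_compl_regular]; exact hcon
      simp only [Set.mem_iUnion, SetLike.mem_coe] at h1
      obtain ⟨Q, hQ, hfQ⟩ := h1
      have hQp : Q.IsPrime := IsAssociatedPrime.isPrime hQ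
      obtain ⟨rs, hlen, hrs, hreg⟩ := ModuleCat.exists_isRegular_of_exists_subsingleton_ext
        (maximalIdeal R) _ M smul_lt N hN hext
      have hD := length_le_dim rs M hrs hreg Q hQ
      rw [hlen, List.length_cons] at hD
      set s : Finset (R ⧸ Q) := (fs.map (Ideal.Quotient.mk Q)).toFinset with hs
      have hscard : s.card ≤ fs.length := by
        simpa using List.toFinset_card_le (fs.map (Ideal.Quotient.mk Q))
      have hloc : IsLocalRing (R ⧸ Q) :=
        IsLocalRing.of_surjective' (Ideal.Quotient.mk Q) Ideal.Quotient.mk_surjective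
      have h3 := ringKrullDim_le_ringKrullDim_quotient_add_card s (by
        intro z hz
        have hz' : z ∈ s := hz
        rw [hs] at hz'
        simp only [List.mem_toFinset, List.mem_map] at hz'
        obtain ⟨g, hg, rfl⟩ := hz'
        rw [IsLocalRing.ringJacobson_eq_maximalIdeal]
        have hgm := hmem g (by simp [hg])
        simp only [SetLike.mem_coe, mem_maximalIdeal, mem_nonunits_iff] at hgm ⊢
        intro hu
        obtain ⟨k, hk⟩ := hu.exists_right_inv
        obtain ⟨k, rfl⟩ := Ideal.Quotient.mk_surjective k
        rw [← map_mul, ← map_one (Ideal.Quotient.mk Q), Ideal.Quotient.mk_eq_mk_iff_sub_mem] at hk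
        have hk2 := IsLocalRing.le_maximalIdeal hQp.ne_top hk
        have h1m : (1 : R) ∈ maximalIdeal R := by
          have := (maximalIdeal R).sub_mem
            ((maximalIdeal R).mul_mem_right k ((mem_maximalIdeal _).mpr hgm)) hk2
          simpa using this
        exact (Ideal.ne_top_iff_one _).mp (Ideal.IsPrime.ne_top inferInstance) h1m)
      have h4 : ringKrullDim ((R ⧸ Q) ⧸ Ideal.span (s : Set (R ⧸ Q))) ≤ 0 := by
        have : Ring.KrullDimLE 0 ((R ⧸ Q) ⧸ Ideal.span (s : Set (R ⧸ Q))) := by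
          apply Ring.KrullDimLE.mk₀
          intro I hI
          let g : R →+* ((R ⧸ Q) ⧸ Ideal.span (s : Set (R ⧸ Q))) :=
            (Ideal.Quotient.mk _).comp (Ideal.Quotient.mk Q)
          have hgs : Function.Surjective g :=
            Ideal.Quotient.mk_surjective.comp Ideal.Quotient.mk_surjective
          have hm : (I.comap g).IsMaximal := by
            have hgz : ∀ r ∈ Q, g r = 0 := by
              intro r hr
              change Ideal.Quotient.mk _ (Ideal.Quotient.mk Q r) = 0
              rw [Ideal.Quotient.eq_zero_iff_mem.mpr hr, map_zero]
            apply hmax _ (Ideal.comap_isPrime g I)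
            · refine le_trans (Submodule.annihilator_top.ge.trans (IsAssociatedPrime.annihilator_le hQ)) ?_
              intro r hr
              rw [Ideal.mem_comap, hgz r hr]; exact I.zero_mem
            · intro h hh
              rw [Ideal.mem_comap]
              rcases List.mem_cons.mp hh with rfl | hh
              · rw [hgz _ hfQ]; exact I.zero_mem
              · have : g h = 0 := by
                  change Ideal.Quotient.mk _ (Ideal.Quotient.mk Q h) = 0
                  rw [Ideal.Quotient.eq_zero_iff_mem]
                  apply Ideal.subset_span
                  simp only [hs, List.coe_toFinset, Set.mem_ofPred_eq, List.mem_map]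
                  exact ⟨h, hh, rfl⟩
                rw [this]; exact I.zero_mem
          have := Ideal.map_eq_top_or_isMaximal_of_surjective g hgs hm
          rw [Ideal.map_comap_of_surjective g hgs] at this
          exact this.resolve_left hI.ne_top
        exact_mod_cast (Order.krullDimLE_iff 0 _).mp this
      have h5 : ((fs.length + 1 : ℕ) : WithBot ℕ∞) ≤ ((fs.length : ℕ) : WithBot ℕ∞) := by
        calc ((fs.length + 1 : ℕ) : WithBot ℕ∞) ≤ _ := hD
          _ ≤ _ := h3
          _ ≤ 0 + ((fs.length : ℕ) : WithBot ℕ∞) := by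
            gcongr
          _ = _ := zero_add _
      have h6 : fs.length + 1 ≤ fs.length := by exact_mod_cast h5
      omega
    rw [isWeaklyRegular_cons_iff]
    refine ⟨hf, ?_⟩
    have hnt : Nontrivial (QuotSMulTop f M) := by
      apply Submodule.Quotient.nontrivial_iff.mpr
      exact (Submodule.top_ne_pointwise_smul_of_mem_jacobson_annihilator
        (hjac (hmem f (by simp)))).symm
    refine ih (ModuleCat.of R (QuotSMulTop f M)) ?_ (fun g hg => hmem g (by simp [hg])) ?_
    · intro i hi
      have zero1 := AddCommGrpCat.isZero_of_iff_subsingleton.mpr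
        (hext i (by rw [List.length_cons]; omega))
      have zero2 := AddCommGrpCat.isZero_of_iff_subsingleton.mpr
        (hext (i + 1) (by rw [List.length_cons]; omega))
      exact AddCommGrpCat.subsingleton_of_isZero <| ShortComplex.Exact.isZero_of_both_zeros
        ((Ext.covariant_sequence_exact₃' N hf.smulShortComplex_shortExact) i (i + 1) rfl)
        (zero1.eq_zero_of_src _) (zero2.eq_zero_of_tgt _)
    · intro Q hQ hann hfs
      have hann' : Module.annihilator R (QuotSMulTop f M) ≤ Q := hann
      apply hmax Q hQ
      · refine le_trans ?_ hann'
        exact LinearMap.annihilator_le_of_surjective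
          (Submodule.mkQ (f • (⊤ : Submodule R M))) (Submodule.mkQ_surjective _)
      · intro g hg
        rcases List.mem_cons.mp hg with rfl | hg
        · apply hann'
          rw [Module.mem_annihilator]
          intro m
          obtain ⟨m, rfl⟩ := Submodule.mkQ_surjective _ m
          rw [← map_smul, Submodule.mkQ_apply, Submodule.Quotient.mk_eq_zero]
          exact Submodule.smul_mem_pointwise_smul m g ⊤ trivial
        · exact hfs g hg

end CM
end E8T

namespace E8T
section Hilb
open RingTheory.Sequence

theorem wr_iff {R : Type} [CommRing R] {n : ℕ} (f : Fin n → R) :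
    IsWeaklyRegular R (List.ofFn f) ↔ ∀ (i : Fin n) (a : R),
      f i * a ∈ Ideal.span (f '' {j | j < i}) → a ∈ Ideal.span (f '' {j | j < i}) := by
  have key : ∀ i : Fin n,
      (Ideal.ofList ((List.ofFn f).take i)) = Ideal.span (f '' {j | j < i}) := by
    intro i
    unfold Ideal.ofList
    congr 1
    ext r
    simp only [Set.mem_ofPred_eq, Set.mem_image, List.mem_take_iff_getElem, List.length_ofFn,
      List.getElem_ofFn]
    constructor
    · rintro ⟨k, hk, rfl⟩
      exact ⟨⟨k, by omega⟩, by rw [Fin.lt_def]; simp; omega, rfl⟩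
    · rintro ⟨j, hj, rfl⟩
      rw [Fin.lt_def] at hj
      exact ⟨j, by omega, rfl⟩
  rw [isWeaklyRegular_iff]
  constructor
  · intro h i a
    have := h i (by simp)
    rw [isSMulRegular_quotient_iff_mem_of_smul_mem, key i] at this
    have := this a
    simpa using this
  · intro h i hi
    rw [List.length_ofFn] at hi
    rw [isSMulRegular_quotient_iff_mem_of_smul_mem]
    have h1 := key ⟨i, hi⟩
    simp only at h1
    rw [h1]
    intro a
    have := h ⟨i, hi⟩ a
    simpa using this

variable {K : Type} [Field K] {n : ℕ}

theorem X_regular : IsWeaklyRegular (MvPolynomial (Fin n) K)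
    (List.ofFn (fun i : Fin n => (X i : MvPolynomial (Fin n) K))) := by
  rw [wr_iff]
  intro i a h
  rw [mem_ideal_span_X_image] at h ⊢
  intro m hm
  obtain ⟨j, hj, hjm⟩ := h (m + Finsupp.single i 1) (by
    rw [mem_support_iff] at hm ⊢
    rwa [mul_comm, coeff_mul_X])
  refine ⟨j, hj, ?_⟩
  have hne : i ≠ j := (ne_of_lt hj).symm
  simpa [Finsupp.single_apply, hne] using hjm

/-- Homogeneity of an ideal, in terms of components. -/
def HomIdeal (w : Fin n → ℕ) (I : Ideal (MvPolynomial (Fin n) K)) : Prop :=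
  ∀ p ∈ I, ∀ m : ℕ, weightedHomogeneousComponent w m p ∈ I

attribute [local instance] MvPolynomial.weightedGradedAlgebra in
theorem homIdeal_span (w : Fin n → ℕ) (s : Set (MvPolynomial (Fin n) K))
    (h : ∀ x ∈ s, ∃ d : ℕ, IsWeightedHomogeneous w x d) : HomIdeal w (Ideal.span s) := by
  intro p hp m
  refine weightedHomogeneousComponent_mem_of_mem K w ?_ hp m
  apply Ideal.homogeneous_span
  intro x hx
  obtain ⟨d, hd⟩ := h x hx
  exact ⟨d, hd⟩

attribute [local instance] MvPolynomial.weightedGradedAlgebra in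
theorem comp_mul (w : Fin n → ℕ) (a b : MvPolynomial (Fin n) K) (e m : ℕ)
    (hb : IsWeightedHomogeneous w b e) : weightedHomogeneousComponent w m (a * b) =
      if e ≤ m then weightedHomogeneousComponent w (m - e) a * b else 0 := by
  have := DirectSum.coe_decompose_mul_of_right_mem (weightedHomogeneousSubmodule K w) (a := a)
    (i := e) m hb
  simpa only [← weightedDecomposition.decompose'_apply] using! this

theorem descent (w : Fin n → ℕ) (hw : ∀ i, w i ≠ 0) (I : Ideal (MvPolynomial (Fin n) K))
    (hI : HomIdeal w I) (s a : MvPolynomial (Fin n) K) (d : ℕ) (ha : IsWeightedHomogeneous w a d)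
    (hs : coeff 0 s ≠ 0) (h : s * a ∈ I) : a ∈ I := by
  have h1 := hI _ h d
  rw [comp_mul w s a d d ha, if_pos le_rfl, Nat.sub_self,
    weightedHomogeneousComponent_zero s hw] at h1
  have h2 := I.mul_mem_left (C (coeff 0 s)⁻¹) h1
  rwa [← mul_assoc, ← C_mul, inv_mul_cancel₀ hs, C_1, one_mul] at h2

theorem graded_regular (w : Fin n → ℕ) (hw : ∀ i, w i ≠ 0)
    (f : Fin n → MvPolynomial (Fin n) K) (e : Fin n → ℕ) (he : ∀ i, e i ≠ 0)
    (hf : ∀ i, IsWeightedHomogeneous w (f i) (e i))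
    (hrad : ∀ i, X i ∈ (Ideal.span (Set.range f)).radical) (i : Fin n)
    (a : MvPolynomial (Fin n) K) (d : ℕ) (ha : IsWeightedHomogeneous w a d)
    (h : f i * a ∈ Ideal.span (f '' {j | j < i})) : a ∈ Ideal.span (f '' {j | j < i}) := by
  let A := MvPolynomial (Fin n) K
  let m : Ideal A := RingHom.ker (constantCoeff : A →+* K)
  have hm : m.IsPrime := RingHom.ker_isPrime _
  let S := Localization.AtPrime m
  have hXm : ∀ i : Fin n, (X i : A) ∈ m := fun i => by simp [m, RingHom.mem_ker]
  have hfm : ∀ i : Fin n, f i ∈ m := fun i => by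
    rw [RingHom.mem_ker, constantCoeff_eq]
    exact (hf i).coeff_eq_zero 0 (by simpa using (he i).symm)
  have hspan : m ≤ Ideal.span (X '' Set.univ : Set A) := by
    intro p hp
    rw [mem_ideal_span_X_image]
    intro u hu
    by_contra hcon
    push Not at hcon
    have hu0 : u = 0 := by ext j; exact hcon j trivial
    rw [mem_support_iff, hu0] at hu
    exact hu hp
  have hreg : IsRegular S ((List.ofFn (fun i : Fin n => (X i : A))).map (algebraMap A S)) :=
    X_regular.isRegular_of_isLocalization_of_mem S m (by
      intro r hr
      rw [List.mem_ofFn] at hr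
      obtain ⟨i, rfl⟩ := hr
      exact hXm i)
  have hmemS : ∀ a : A, a ∈ m → algebraMap A S a ∈ IsLocalRing.maximalIdeal S := by
    intro a ha
    exact (IsLocalization.AtPrime.to_map_mem_maximal_iff S m a).mpr ha
  have hsupp : Module.support S (S ⧸ IsLocalRing.maximalIdeal S) =
      PrimeSpectrum.zeroLocus (IsLocalRing.maximalIdeal S : Set S) := by
    rw [Module.support_eq_zeroLocus, Ideal.annihilator_quotient]
  have hnoeth : IsNoetherianRing S := IsLocalization.isNoetherianRing m.primeCompl S inferInstance
  have hext := ModuleCat.subsingleton_ext_of_exists_isRegular (IsLocalRing.maximalIdeal S)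
    (ModuleCat.of S (S ⧸ IsLocalRing.maximalIdeal S)) hsupp.subset (ModuleCat.of S S)
    (by
      have : (IsLocalRing.maximalIdeal S) • (⊤ : Submodule S S) < ⊤ := by
        rw [smul_eq_mul, Ideal.mul_top]
        exact Ideal.IsPrime.ne_top'.lt_top
      exact this) _ (by
      intro r hr
      rw [List.mem_map] at hr
      obtain ⟨x, hx, rfl⟩ := hr
      rw [List.mem_ofFn] at hx
      obtain ⟨i, rfl⟩ := hx
      exact hmemS _ (hXm i)) hreg
  have hwr := weaklyRegular_of_ext (ModuleCat.of S (S ⧸ IsLocalRing.maximalIdeal S)) hsupp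
    (List.ofFn (fun i => algebraMap A S (f i))) (ModuleCat.of S S)
    (by
      intro i hi
      apply hext
      simpa using hi)
    (by
      intro r hr
      rw [List.mem_ofFn] at hr
      obtain ⟨i, rfl⟩ := hr
      exact hmemS _ (hfm i))
    (by
      intro Q hQ _ hfQ
      have hle : m ≤ Q.comap (algebraMap A S) := by
        refine hspan.trans ?_
        rw [Ideal.span_le]
        rintro _ ⟨i, -, rfl⟩
        have hp : (Q.comap (algebraMap A S)).IsPrime := Ideal.comap_isPrime _ _
        have : (Ideal.span (Set.range f)).radical ≤ Q.comap (algebraMap A S) := by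
          rw [hp.radical_le_iff, Ideal.span_le]
          rintro _ ⟨j, rfl⟩
          exact hfQ _ (by rw [List.mem_ofFn]; exact ⟨j, rfl⟩)
        exact this (hrad i)
      have h1 : IsLocalRing.maximalIdeal S ≤ Q := by
        rw [← IsLocalization.AtPrime.map_eq_maximalIdeal m S]
        exact Ideal.map_le_iff_le_comap.mpr hle
      have h2 := (IsLocalRing.maximalIdeal.isMaximal S).eq_of_le hQ.ne_top h1
      rw [← h2]
      exact IsLocalRing.maximalIdeal.isMaximal S)
  have hwr' : IsWeaklyRegular S (List.ofFn (fun i => algebraMap A S (f i))) := hwr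
  rw [wr_iff] at hwr'
  have himg : Ideal.span ((fun i => algebraMap A S (f i)) '' {j | j < i}) =
      (Ideal.span (f '' {j | j < i})).map (algebraMap A S) := by
    rw [Ideal.map_span, Set.image_image]
  have h3 := hwr' i (algebraMap A S a) (by
    rw [himg, ← map_mul]
    exact Ideal.mem_map_of_mem _ h)
  rw [himg, IsLocalization.algebraMap_mem_map_algebraMap_iff m.primeCompl] at h3
  obtain ⟨s, hs, hsa⟩ := h3
  refine descent w hw _ (homIdeal_span w _ ?_) s a d ha ?_ hsa
  · rintro _ ⟨j, -, rfl⟩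
    exact ⟨e j, hf j⟩
  · intro h0
    exact hs (RingHom.mem_ker.mpr h0 : s ∈ m)

end Hilb
end E8T

namespace E8T
section Hilb2
variable {K : Type} [Field K] {n : ℕ}

theorem finrank_map_add {V V' : Type} [AddCommGroup V] [Module K V] [AddCommGroup V'] [Module K V']
    (q : V →ₗ[K] V') (U : Submodule K V) [FiniteDimensional K U] :
    Module.finrank K (U.map q) + Module.finrank K (U ⊓ LinearMap.ker q : Submodule K V) =
      Module.finrank K U := by
  have h := LinearMap.finrank_range_add_finrank_ker (q.domRestrict U)
  rw [LinearMap.range_domRestrict, LinearMap.ker_domRestrict] at h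
  rw [← h]
  congr 1
  rw [← Submodule.map_comap_subtype]
  exact (Submodule.equivMapOfInjective U.subtype U.injective_subtype _).finrank_eq.symm

/-- The image of the degree `d` part in the quotient. -/
noncomputable def V (w : Fin n → ℕ) (I : Ideal (MvPolynomial (Fin n) K)) (d : ℕ) :
    Submodule K (MvPolynomial (Fin n) K ⧸ I) :=
  (weightedHomogeneousSubmodule K w d).map (Ideal.Quotient.mkₐ K I).toLinearMap

theorem mem_V (w : Fin n → ℕ) (I : Ideal (MvPolynomial (Fin n) K)) (d : ℕ) (x) :
    x ∈ V w I d ↔ ∃ a, IsWeightedHomogeneous w a d ∧ Ideal.Quotient.mk I a = x := by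
  rfl

theorem V_fin (w : Fin n → ℕ) (hw : ∀ i, w i ≠ 0) (I : Ideal (MvPolynomial (Fin n) K)) (d : ℕ) :
    FiniteDimensional K (V w I d) := by
  rw [FiniteDimensional, Module.Finite.iff_fg]
  exact (weightedHomogeneousSubmodule_fg K w hw d).map _

theorem V_step (w : Fin n → ℕ) (hw : ∀ i, w i ≠ 0) (I : Ideal (MvPolynomial (Fin n) K))
    (hI : HomIdeal w I) (f : MvPolynomial (Fin n) K) (e : ℕ) (hf : IsWeightedHomogeneous w f e)
    (hreg : ∀ a d, IsWeightedHomogeneous w a d → f * a ∈ I → a ∈ I) (d : ℕ) :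
    Module.finrank K (V w (I ⊔ Ideal.span {f}) d) +
      (if e ≤ d then Module.finrank K (V w I (d - e)) else 0) = Module.finrank K (V w I d) := by
  have hfin := V_fin w hw I
  let q : (MvPolynomial (Fin n) K ⧸ I) →ₗ[K] (MvPolynomial (Fin n) K ⧸ I ⊔ Ideal.span {f}) :=
    (Ideal.Quotient.factorₐ K (le_sup_left : I ≤ I ⊔ Ideal.span {f})).toLinearMap
  have hq : ∀ a, q (Ideal.Quotient.mk I a) = Ideal.Quotient.mk _ a := fun a => rfl
  have hmap : (V w I d).map q = V w (I ⊔ Ideal.span {f}) d := by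
    ext x
    rw [Submodule.mem_map]
    simp only [mem_V]
    constructor
    · rintro ⟨_, ⟨a, ha, rfl⟩, rfl⟩
      exact ⟨a, ha, rfl⟩
    · rintro ⟨a, ha, rfl⟩
      exact ⟨_, ⟨a, ha, rfl⟩, rfl⟩
  have h1 := finrank_map_add q (V w I d)
  rw [hmap] at h1
  rw [← h1]
  congr 1
  have hker : ∀ a, IsWeightedHomogeneous w a d → a ∈ I ⊔ Ideal.span {f} →
      ∃ b, a - (if e ≤ d then weightedHomogeneousComponent w (d - e) b * f else 0) ∈ I := by
    intro a ha hm
    obtain ⟨y, hy, z, hz, hyz⟩ := Submodule.mem_sup.mp hm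
    obtain ⟨b, rfl⟩ := Ideal.mem_span_singleton'.mp hz
    refine ⟨b, ?_⟩
    have h2 := hI y hy d
    have h3 : weightedHomogeneousComponent w d a = a :=
      IsWeightedHomogeneous.weightedHomogeneousComponent_same ha
    rw [← hyz, map_add, comp_mul w b f e d hf, hyz] at h3
    rw [← eq_sub_iff_add_eq] at h3
    rwa [h3] at h2
  split_ifs with hed
  · let L : (MvPolynomial (Fin n) K ⧸ I) →ₗ[K] (MvPolynomial (Fin n) K ⧸ I) :=
      LinearMap.mulLeft K (Ideal.Quotient.mk I f)
    have hL : ∀ a, L (Ideal.Quotient.mk I a) = Ideal.Quotient.mk I (f * a) := fun a => by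
      simp [L]
    have h2 := finrank_map_add L (V w I (d - e))
    have hbot : V w I (d - e) ⊓ LinearMap.ker L = ⊥ := by
      rw [eq_bot_iff]
      rintro x ⟨hx, hk⟩
      obtain ⟨a, ha, rfl⟩ := (mem_V _ _ _ _).mp hx
      have hk' : L (Ideal.Quotient.mk I a) = 0 := hk
      rw [hL, Ideal.Quotient.eq_zero_iff_mem] at hk'
      rw [Submodule.mem_bot, Ideal.Quotient.eq_zero_iff_mem]
      exact hreg a _ ha hk'
    rw [hbot, finrank_bot, add_zero] at h2
    rw [← h2]
    have hVL : (V w I (d - e)).map L = V w I d ⊓ LinearMap.ker q := by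
      ext x
      rw [Submodule.mem_map]
      constructor
      · rintro ⟨_, hx, rfl⟩
        obtain ⟨a, ha, rfl⟩ := (mem_V _ _ _ _).mp hx
        rw [hL]
        refine ⟨(mem_V _ _ _ _).mpr ⟨f * a, ?_, rfl⟩, ?_⟩
        · have := hf.mul ha
          rwa [Nat.add_sub_cancel' hed] at this
        · change q (Ideal.Quotient.mk I (f * a)) = 0
          rw [hq, Ideal.Quotient.eq_zero_iff_mem]
          exact Ideal.mul_mem_right _ _ (Ideal.mem_sup_right (Ideal.mem_span_singleton_self f))
      · rintro ⟨hx, hk⟩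
        obtain ⟨a, ha, rfl⟩ := (mem_V _ _ _ _).mp hx
        have hk' : q (Ideal.Quotient.mk I a) = 0 := hk
        rw [hq, Ideal.Quotient.eq_zero_iff_mem] at hk'
        obtain ⟨b, hb⟩ := hker a ha hk'
        rw [if_pos hed] at hb
        refine ⟨Ideal.Quotient.mk I (weightedHomogeneousComponent w (d - e) b),
          (mem_V _ _ _ _).mpr ⟨_, weightedHomogeneousComponent_isWeightedHomogeneous _ _, rfl⟩, ?_⟩
        rw [hL, mul_comm]
        exact (Ideal.Quotient.mk_eq_mk_iff_sub_mem _ _).mpr hb |>.symm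
    rw [hVL]
  · have hbot : V w I d ⊓ LinearMap.ker q = ⊥ := by
      rw [eq_bot_iff]
      rintro x ⟨hx, hk⟩
      obtain ⟨a, ha, rfl⟩ := (mem_V _ _ _ _).mp hx
      have hk' : q (Ideal.Quotient.mk I a) = 0 := hk
      rw [hq, Ideal.Quotient.eq_zero_iff_mem] at hk'
      obtain ⟨b, hb⟩ := hker a ha hk'
      rw [if_neg hed, sub_zero] at hb
      rw [Submodule.mem_bot, Ideal.Quotient.eq_zero_iff_mem]
      exact hb
    rw [hbot, finrank_bot]

/-- Hilbert series. -/
noncomputable def HS (w : Fin n → ℕ) (I : Ideal (MvPolynomial (Fin n) K)) : PowerSeries ℤ :=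
  PowerSeries.mk fun d => (Module.finrank K (V w I d) : ℤ)

theorem HS_step (w : Fin n → ℕ) (hw : ∀ i, w i ≠ 0) (I : Ideal (MvPolynomial (Fin n) K))
    (hI : HomIdeal w I) (f : MvPolynomial (Fin n) K) (e : ℕ) (hf : IsWeightedHomogeneous w f e)
    (hreg : ∀ a d, IsWeightedHomogeneous w a d → f * a ∈ I → a ∈ I) :
    HS w (I ⊔ Ideal.span {f}) = HS w I * (1 - PowerSeries.X ^ e) := by
  ext d
  rw [mul_sub, mul_one, map_sub, PowerSeries.coeff_mul_X_pow']
  simp only [HS, PowerSeries.coeff_mk]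
  have := V_step w hw I hI f e hf hreg d
  rw [← this]
  push_cast
  split_ifs <;> simp

theorem HS_prod (w : Fin n → ℕ) (hw : ∀ i, w i ≠ 0)
    (f : Fin n → MvPolynomial (Fin n) K) (e : Fin n → ℕ) (he : ∀ i, e i ≠ 0)
    (hf : ∀ i, IsWeightedHomogeneous w (f i) (e i))
    (hrad : ∀ i, X i ∈ (Ideal.span (Set.range f)).radical) :
    HS w (Ideal.span (Set.range f)) =
      HS w (⊥ : Ideal (MvPolynomial (Fin n) K)) * ∏ i, (1 - PowerSeries.X ^ e i) := by
  have key : ∀ k : ℕ, k ≤ n → HS w (Ideal.span (f '' {j | (j : ℕ) < k})) =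
      HS w (⊥ : Ideal (MvPolynomial (Fin n) K)) *
        ∏ i ∈ Finset.univ.filter (fun i : Fin n => (i : ℕ) < k), (1 - PowerSeries.X ^ e i) := by
    intro k
    induction k with
    | zero => intro _; simp
    | succ k ih =>
      intro hk
      let i : Fin n := ⟨k, hk⟩
      have hset : {j : Fin n | (j : ℕ) < k} = {j | j < i} := by
        ext j; simp [i, Fin.lt_def]
      have hset2 : {j : Fin n | (j : ℕ) < k + 1} = {j : Fin n | (j : ℕ) < k} ∪ {i} := by
        ext j
        simp only [Set.mem_ofPred_eq, Set.mem_union, Set.mem_singleton_iff, i, Fin.ext_iff]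
        omega
      have hfil : (Finset.univ.filter fun j : Fin n => (j : ℕ) < k + 1) =
          insert i (Finset.univ.filter fun j : Fin n => (j : ℕ) < k) := by
        ext j
        simp only [Finset.mem_filter, Finset.mem_univ, true_and, Finset.mem_insert, i, Fin.ext_iff]
        omega
      rw [hset2, Set.image_union, Set.image_singleton, Ideal.span_union, hfil,
        Finset.prod_insert (by simp [i])]
      rw [HS_step w hw _ (homIdeal_span w _ (by rintro _ ⟨j, -, rfl⟩; exact ⟨e j, hf j⟩)) (f i) (e i)
        (hf i) (by
          intro a d ha h
          rw [hset] at h ⊢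
          exact graded_regular w hw f e he hf hrad i a d ha h), ih (by omega)]
      ring
  have := key n le_rfl
  have h1 : {j : Fin n | (j : ℕ) < n} = Set.univ := by ext j; simp
  rw [h1, Set.image_univ] at this
  rw [this]
  rw [Finset.filter_true_of_mem (fun j _ => j.2)]

theorem HS_max (w : Fin n → ℕ) (hw : ∀ i, w i ≠ 0) :
    HS w (Ideal.span (Set.range (X : Fin n → MvPolynomial (Fin n) K))) = 1 := by
  have hmem : ∀ p : MvPolynomial (Fin n) K, p ∈ Ideal.span (Set.range X) ↔ coeff 0 p = 0 := by
    intro p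
    rw [← Set.image_univ, mem_ideal_span_X_image]
    constructor
    · intro h
      by_contra h0
      obtain ⟨i, -, hi⟩ := h 0 (by rwa [mem_support_iff])
      simp at hi
    · intro h m hm
      by_contra hcon
      push Not at hcon
      have hm0 : m = 0 := by ext j; exact hcon j trivial
      rw [mem_support_iff, hm0] at hm
      exact hm h
  ext d
  simp only [HS, PowerSeries.coeff_mk, PowerSeries.coeff_one]
  split_ifs with hd
  · subst hd
    have : V w (Ideal.span (Set.range (X : Fin n → MvPolynomial (Fin n) K))) 0 =
        Submodule.span K {Ideal.Quotient.mk _ 1} := by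
      ext x
      rw [mem_V, Submodule.mem_span_singleton]
      constructor
      · rintro ⟨a, ha, rfl⟩
        refine ⟨coeff 0 a, ?_⟩
        have := ha.weightedHomogeneousComponent_same
        rw [weightedHomogeneousComponent_zero a hw] at this
        conv_rhs => rw [← this]
        rw [C_eq_smul_one]
        rfl
      · rintro ⟨c, rfl⟩
        refine ⟨C c, isWeightedHomogeneous_C w c, ?_⟩
        rw [C_eq_smul_one]
        rfl
    rw [this, finrank_span_singleton]
    · rfl
    · rw [Ne, Ideal.Quotient.eq_zero_iff_mem, hmem]
      simp
  · have : V w (Ideal.span (Set.range (X : Fin n → MvPolynomial (Fin n) K))) d = ⊥ := by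
      rw [eq_bot_iff]
      rintro x hx
      obtain ⟨a, ha, rfl⟩ := (mem_V _ _ _ _).mp hx
      rw [Submodule.mem_bot, Ideal.Quotient.eq_zero_iff_mem, hmem]
      exact ha.coeff_eq_zero 0 (by simpa using Ne.symm hd)
    rw [this, finrank_bot]
    rfl

theorem finrank_mul (w : Fin n → ℕ) (hw : ∀ i, w i ≠ 0)
    (f : Fin n → MvPolynomial (Fin n) K) (e : Fin n → ℕ) (he : ∀ i, e i ≠ 0)
    (hf : ∀ i, IsWeightedHomogeneous w (f i) (e i))
    (hrad : ∀ i, X i ∈ (Ideal.span (Set.range f)).radical) :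
    Module.finrank K (MvPolynomial (Fin n) K ⧸ Ideal.span (Set.range f)) * ∏ i, w i
      = ∏ i, e i := by
  classical
  have h1 := HS_prod w hw f e he hf hrad
  have h2 := HS_prod w hw (X : Fin n → MvPolynomial (Fin n) K) w hw
    (fun i => isWeightedHomogeneous_X K w i)
    (fun i => Ideal.le_radical (Ideal.subset_span ⟨i, rfl⟩))
  rw [HS_max w hw] at h2
  set J := Ideal.span (Set.range f) with hJ
  have hhom : HomIdeal w J := homIdeal_span w _ (by rintro _ ⟨j, rfl⟩; exact ⟨e j, hf j⟩)
  have h3 : HS w J * ∏ i, (1 - PowerSeries.X ^ w i) = ∏ i, (1 - PowerSeries.X ^ e i) := by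
    rw [h1, mul_right_comm, ← h2, one_mul]
  -- vanishing in large degree
  have hD : ∃ D : ℕ, ∀ d, D ≤ d → ∀ a, IsWeightedHomogeneous w a d → a ∈ J := by
    choose k hk using hrad
    let N := ∑ i, k i
    refine ⟨N * (∑ i, w i) + 1, ?_⟩
    intro d hd a ha
    rw [a.as_sum]
    refine Ideal.sum_mem _ ?_
    intro m hm
    have hwm := ha (mem_support_iff.mp hm)
    have hex : ∃ i, k i ≤ m i := by
      by_contra hcon
      push Not at hcon
      have : Finsupp.weight w m ≤ N * ∑ i, w i := by
        rw [Finsupp.weight_apply, Finsupp.sum_fintype _ _ (by simp), Finset.mul_sum]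
        apply Finset.sum_le_sum
        intro i _
        rw [smul_eq_mul]
        exact Nat.mul_le_mul_right _ ((hcon i).le.trans
          (Finset.single_le_sum (fun _ _ => Nat.zero_le _) (Finset.mem_univ i)))
      omega
    obtain ⟨i, hi⟩ := hex
    have hdiv : (X i : MvPolynomial (Fin n) K) ^ k i ∣ monomial m (coeff m a) := by
      rw [X_pow_eq_monomial, monomial_dvd_monomial]
      exact ⟨Or.inr (Finsupp.single_le_iff.mpr hi), one_dvd _⟩
    exact J.mem_of_dvd hdiv (hk i)
  obtain ⟨D, hD⟩ := hD
  have hfin := V_fin w hw J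
  have hV0 : ∀ d, D ≤ d → Module.finrank K (V w J d) = 0 := by
    intro d hd
    have : V w J d = ⊥ := by
      rw [eq_bot_iff]
      rintro x hx
      obtain ⟨a, ha, rfl⟩ := (mem_V _ _ _ _).mp hx
      rw [Submodule.mem_bot, Ideal.Quotient.eq_zero_iff_mem]
      exact hD d hd a ha
    rw [this, finrank_bot]
  -- the quotient is the sum of its graded pieces
  have hsum : Module.finrank K (MvPolynomial (Fin n) K ⧸ J) =
      ∑ d : Fin D, Module.finrank K (V w J d) := by
    let g : MvPolynomial (Fin n) K →ₗ[K] (Π d : Fin D, V w J d) :=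
      LinearMap.pi fun d =>
        LinearMap.codRestrict (V w J d) ((Ideal.Quotient.mkₐ K J).toLinearMap ∘ₗ
          weightedHomogeneousComponent w (d : ℕ))
          (fun a => (mem_V _ _ _ _).mpr
            ⟨_, weightedHomogeneousComponent_isWeightedHomogeneous _ _, rfl⟩)
    have hg : ∀ a (d : Fin D), ((g a d : V w J d) : MvPolynomial (Fin n) K ⧸ J) =
        Ideal.Quotient.mk J (weightedHomogeneousComponent w (d : ℕ) a) := fun a d => rfl
    have hsurj : Function.Surjective g := by
      intro v
      choose a ha hav using fun d => (mem_V _ _ _ _).mp (v d).2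
      refine ⟨∑ d, a d, ?_⟩
      ext d
      rw [hg, map_sum, Finset.sum_eq_single d]
      · rw [(ha d).weightedHomogeneousComponent_same, hav]
      · intro b _ hb
        rw [weightedHomogeneousComponent_of_mem (ha b), if_neg]
        intro h; exact hb (Fin.ext h.symm)
      · simp
    have hker : LinearMap.ker g = J.restrictScalars K := by
      ext a
      rw [LinearMap.mem_ker, Submodule.restrictScalars_mem]
      constructor
      · intro h
        rw [← sum_weightedHomogeneousComponent w a, finsum_eq_sum_of_support_subset _
          (s := (weightedHomogeneousComponent_finsupp (w := w) a).toFinset)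
          (fun x hx => (Set.Finite.mem_toFinset _).mpr hx)]
        refine Ideal.sum_mem _ ?_
        intro d _
        by_cases hd : d < D
        · have := hg a ⟨d, hd⟩
          rw [h] at this
          exact Ideal.Quotient.eq_zero_iff_mem.mp this.symm
        · exact hD d (by omega) _ (weightedHomogeneousComponent_isWeightedHomogeneous _ _)
      · intro h
        ext d
        rw [hg]
        exact Ideal.Quotient.eq_zero_iff_mem.mpr (hhom a h d)
    have eq1 : (MvPolynomial (Fin n) K ⧸ LinearMap.ker g) ≃ₗ[K] (Π d : Fin D, V w J d) :=
      g.quotKerEquivOfSurjective hsurj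
    have eq2 : (MvPolynomial (Fin n) K ⧸ J) ≃ₗ[K]
        (MvPolynomial (Fin n) K ⧸ (J.restrictScalars K)) :=
      (Submodule.Quotient.restrictScalarsEquiv K J).symm
    rw [eq2.finrank_eq, ← hker, eq1.finrank_eq, Module.finrank_pi_fintype]
  -- polynomial identity
  let p : Polynomial ℤ := ∑ d : Fin D,
    Polynomial.monomial (d : ℕ) (Module.finrank K (V w J d) : ℤ)
  have hp : (p : PowerSeries ℤ) = HS w J := by
    ext d
    rw [Polynomial.coeff_coe]
    simp only [p, HS, PowerSeries.coeff_mk, Polynomial.finsetSum_coeff, Polynomial.coeff_monomial]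
    by_cases hd : d < D
    · rw [Finset.sum_eq_single ⟨d, hd⟩]
      · simp
      · intro b _ hb
        rw [if_neg]
        intro h; exact hb (Fin.ext h)
      · simp
    · rw [hV0 d (by omega), Finset.sum_eq_zero]
      · rfl
      · intro b _
        rw [if_neg]
        have := b.2
        omega
  have h4 : p * ∏ i, (1 - Polynomial.X ^ w i) = ∏ i, (1 - Polynomial.X ^ e i) := by
    apply Polynomial.coe_injective
    have hc : ∀ r : Fin n → ℕ, ((∏ i, (1 - Polynomial.X ^ r i) : Polynomial ℤ) : PowerSeries ℤ)
        = ∏ i, (1 - PowerSeries.X ^ r i) := by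
      intro r
      rw [← Polynomial.coeToPowerSeries.ringHom_apply, map_prod]
      simp
    rw [Polynomial.coe_mul, hc, hc, hp, h3]
  have hfac : ∀ r : Fin n → ℕ, (∏ i, (1 - Polynomial.X ^ r i) : Polynomial ℤ) =
      (1 - Polynomial.X) ^ n * ∏ i, ∑ j ∈ Finset.range (r i), Polynomial.X ^ j := by
    intro r
    simp_rw [← mul_neg_geom_sum]
    rw [Finset.prod_mul_distrib]
    simp
  rw [hfac, hfac, mul_left_comm] at h4
  have hne : ((1 - Polynomial.X : Polynomial ℤ)) ^ n ≠ 0 := by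
    apply pow_ne_zero
    intro h
    have := congrArg (Polynomial.eval 0) h
    simp at this
  have h5 := congrArg (Polynomial.eval 1) (mul_left_cancel₀ hne h4)
  simp only [Polynomial.eval_mul, Polynomial.eval_prod, Polynomial.eval_finsetSum,
    Polynomial.eval_pow, Polynomial.eval_X, one_pow, Finset.sum_const, Finset.card_range,
    p, Polynomial.eval_monomial, mul_one, nsmul_eq_mul] at h5
  rw [hsum]
  exact_mod_cast h5

end Hilb2
end E8T

namespace E8T

/-- The weights of the sixteen variables. -/
def wt : Fin 16 → ℕ := ![1, 1, 1, 1, 1, 1, 1, 1, 1, 3, 4, 5, 6, 9, 10, 15]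

/-- Homogeneity with respect to `wt`. -/
def H (p : P) (d : ℕ) : Prop := IsWeightedHomogeneous wt p d

theorem H.add {p q : P} {d : ℕ} (hp : H p d) (hq : H q d) : H (p + q) d :=
  IsWeightedHomogeneous.add hp hq

theorem H.neg {p : P} {d : ℕ} (hp : H p d) : H (-p) d :=
  IsWeightedHomogeneous.neg hp

theorem H.sub {p q : P} {d : ℕ} (hp : H p d) (hq : H q d) : H (p - q) d :=
  IsWeightedHomogeneous.sub hp hq

theorem H.mul {p q : P} {a b d : ℕ} (hp : H p a) (hq : H q b) (h : a + b = d) : H (p * q) d := by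
  subst h
  exact IsWeightedHomogeneous.mul hp hq

theorem H.pow {p : P} {a d : ℕ} (n : ℕ) (hp : H p a) (h : n * a = d) : H (p ^ n) d := by
  subst h
  exact IsWeightedHomogeneous.pow hp n

theorem H.num (n : ℕ) [n.AtLeastTwo] {d : ℕ} (h : 0 = d) : H (OfNat.ofNat n : P) d := by
  subst h
  exact isWeightedHomogeneous_C wt ((OfNat.ofNat n : ℤ))

theorem H.X {i : Fin 16} {d : ℕ} (h : wt i = d) : H (X i) d := by
  subst h
  exact isWeightedHomogeneous_X ℤ wt i

theorem H.tt {d : ℕ} (h : 1 = d) : H t d := H.X h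
theorem H.uu {d : ℕ} (h : 1 = d) : H u d := H.X h
theorem H.g3 {d : ℕ} (h : 3 = d) : H g3 d := H.X h
theorem H.g4 {d : ℕ} (h : 4 = d) : H g4 d := H.X h
theorem H.g5 {d : ℕ} (h : 5 = d) : H g5 d := H.X h
theorem H.g6 {d : ℕ} (h : 6 = d) : H g6 d := H.X h
theorem H.g9 {d : ℕ} (h : 9 = d) : H g9 d := H.X h
theorem H.g10 {d : ℕ} (h : 10 = d) : H g10 d := H.X h
theorem H.g15 {d : ℕ} (h : 15 = d) : H g15 d := H.X h

theorem H.c {n d : ℕ} (h : n = d) : H (c n) d := by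
  subst h
  unfold E8T.c esymm
  rw [map_sum]
  apply IsWeightedHomogeneous.sum
  intro s hs
  rw [map_prod]
  have h1 : n = ∑ i ∈ s, 1 := by
    rw [Finset.sum_const, smul_eq_mul, mul_one, (Finset.mem_powersetCard.mp hs).2]
  conv => arg 3; rw [h1]
  apply IsWeightedHomogeneous.prod
  intro i _
  rw [rename_X]
  have h2 : wt (Fin.castLE (by norm_num) i) = 1 := by
    fin_cases i <;> rfl
  rw [← h2]
  exact isWeightedHomogeneous_X ℤ wt _

end E8T

namespace E8T

theorem H.rho1 {d : ℕ} (h : 1 = d) : H rho1 d := by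
  subst h
  unfold E8T.rho1
  repeat' first
    | with_reducible apply H.add
    | with_reducible apply H.sub
    | with_reducible apply H.mul
    | with_reducible apply H.pow
    | with_reducible apply H.neg
    | with_reducible apply H.num
    | with_reducible apply H.tt
    | with_reducible apply H.uu
    | with_reducible apply H.g3
    | with_reducible apply H.g4
    | with_reducible apply H.g5
    | with_reducible apply H.g6
    | with_reducible apply H.g9
    | with_reducible apply H.g10
    | with_reducible apply H.g15
    | with_reducible apply H.c
    | rfl

theorem H.rho2 {d : ℕ} (h : 2 = d) : H rho2 d := by
  subst h
  unfold E8T.rho2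
  repeat' first
    | with_reducible apply H.add
    | with_reducible apply H.sub
    | with_reducible apply H.mul
    | with_reducible apply H.pow
    | with_reducible apply H.neg
    | with_reducible apply H.num
    | with_reducible apply H.tt
    | with_reducible apply H.uu
    | with_reducible apply H.g3
    | with_reducible apply H.g4
    | with_reducible apply H.g5
    | with_reducible apply H.g6
    | with_reducible apply H.g9
    | with_reducible apply H.g10
    | with_reducible apply H.g15
    | with_reducible apply H.c
    | rfl

theorem H.rho3 {d : ℕ} (h : 3 = d) : H rho3 d := by
  subst h
  unfold E8T.rho3
  repeat' first
    | with_reducible apply H.add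
    | with_reducible apply H.sub
    | with_reducible apply H.mul
    | with_reducible apply H.pow
    | with_reducible apply H.neg
    | with_reducible apply H.num
    | with_reducible apply H.tt
    | with_reducible apply H.uu
    | with_reducible apply H.g3
    | with_reducible apply H.g4
    | with_reducible apply H.g5
    | with_reducible apply H.g6
    | with_reducible apply H.g9
    | with_reducible apply H.g10
    | with_reducible apply H.g15
    | with_reducible apply H.c
    | rfl

theorem H.rho4 {d : ℕ} (h : 4 = d) : H rho4 d := by
  subst h
  unfold E8T.rho4
  repeat' first
    | with_reducible apply H.add
    | with_reducible apply H.sub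
    | with_reducible apply H.mul
    | with_reducible apply H.pow
    | with_reducible apply H.neg
    | with_reducible apply H.num
    | with_reducible apply H.tt
    | with_reducible apply H.uu
    | with_reducible apply H.g3
    | with_reducible apply H.g4
    | with_reducible apply H.g5
    | with_reducible apply H.g6
    | with_reducible apply H.g9
    | with_reducible apply H.g10
    | with_reducible apply H.g15
    | with_reducible apply H.c
    | rfl

theorem H.rho5 {d : ℕ} (h : 5 = d) : H rho5 d := by
  subst h
  unfold E8T.rho5
  repeat' first
    | with_reducible apply H.add
    | with_reducible apply H.sub
    | with_reducible apply H.mul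
    | with_reducible apply H.pow
    | with_reducible apply H.neg
    | with_reducible apply H.num
    | with_reducible apply H.tt
    | with_reducible apply H.uu
    | with_reducible apply H.g3
    | with_reducible apply H.g4
    | with_reducible apply H.g5
    | with_reducible apply H.g6
    | with_reducible apply H.g9
    | with_reducible apply H.g10
    | with_reducible apply H.g15
    | with_reducible apply H.c
    | rfl

theorem H.rho6 {d : ℕ} (h : 6 = d) : H rho6 d := by
  subst h
  unfold E8T.rho6
  repeat' first
    | with_reducible apply H.add
    | with_reducible apply H.sub
    | with_reducible apply H.mul
    | with_reducible apply H.pow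
    | with_reducible apply H.neg
    | with_reducible apply H.num
    | with_reducible apply H.tt
    | with_reducible apply H.uu
    | with_reducible apply H.g3
    | with_reducible apply H.g4
    | with_reducible apply H.g5
    | with_reducible apply H.g6
    | with_reducible apply H.g9
    | with_reducible apply H.g10
    | with_reducible apply H.g15
    | with_reducible apply H.c
    | rfl

theorem H.rho8 {d : ℕ} (h : 8 = d) : H rho8 d := by
  subst h
  unfold E8T.rho8
  repeat' first
    | with_reducible apply H.add
    | with_reducible apply H.sub
    | with_reducible apply H.mul
    | with_reducible apply H.pow
    | with_reducible apply H.neg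
    | with_reducible apply H.num
    | with_reducible apply H.tt
    | with_reducible apply H.uu
    | with_reducible apply H.g3
    | with_reducible apply H.g4
    | with_reducible apply H.g5
    | with_reducible apply H.g6
    | with_reducible apply H.g9
    | with_reducible apply H.g10
    | with_reducible apply H.g15
    | with_reducible apply H.c
    | rfl

theorem H.rho9 {d : ℕ} (h : 9 = d) : H rho9 d := by
  subst h
  unfold E8T.rho9
  repeat' first
    | with_reducible apply H.add
    | with_reducible apply H.sub
    | with_reducible apply H.mul
    | with_reducible apply H.pow
    | with_reducible apply H.neg
    | with_reducible apply H.num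
    | with_reducible apply H.tt
    | with_reducible apply H.uu
    | with_reducible apply H.g3
    | with_reducible apply H.g4
    | with_reducible apply H.g5
    | with_reducible apply H.g6
    | with_reducible apply H.g9
    | with_reducible apply H.g10
    | with_reducible apply H.g15
    | with_reducible apply H.c
    | rfl

theorem H.rho10 {d : ℕ} (h : 10 = d) : H rho10 d := by
  subst h
  unfold E8T.rho10
  repeat' first
    | with_reducible apply H.add
    | with_reducible apply H.sub
    | with_reducible apply H.mul
    | with_reducible apply H.pow
    | with_reducible apply H.neg
    | with_reducible apply H.num
    | with_reducible apply H.tt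
    | with_reducible apply H.uu
    | with_reducible apply H.g3
    | with_reducible apply H.g4
    | with_reducible apply H.g5
    | with_reducible apply H.g6
    | with_reducible apply H.g9
    | with_reducible apply H.g10
    | with_reducible apply H.g15
    | with_reducible apply H.c
    | rfl

theorem H.rho12 {d : ℕ} (h : 12 = d) : H rho12 d := by
  subst h
  unfold E8T.rho12
  repeat' first
    | with_reducible apply H.add
    | with_reducible apply H.sub
    | with_reducible apply H.mul
    | with_reducible apply H.pow
    | with_reducible apply H.neg
    | with_reducible apply H.num
    | with_reducible apply H.tt
    | with_reducible apply H.uu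
    | with_reducible apply H.g3
    | with_reducible apply H.g4
    | with_reducible apply H.g5
    | with_reducible apply H.g6
    | with_reducible apply H.g9
    | with_reducible apply H.g10
    | with_reducible apply H.g15
    | with_reducible apply H.c
    | rfl

theorem H.rho14 {d : ℕ} (h : 14 = d) : H rho14 d := by
  subst h
  unfold E8T.rho14
  repeat' first
    | with_reducible apply H.add
    | with_reducible apply H.sub
    | with_reducible apply H.mul
    | with_reducible apply H.pow
    | with_reducible apply H.neg
    | with_reducible apply H.num
    | with_reducible apply H.tt
    | with_reducible apply H.uu
    | with_reducible apply H.g3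
    | with_reducible apply H.g4
    | with_reducible apply H.g5
    | with_reducible apply H.g6
    | with_reducible apply H.g9
    | with_reducible apply H.g10
    | with_reducible apply H.g15
    | with_reducible apply H.c
    | rfl

theorem H.rho15 {d : ℕ} (h : 15 = d) : H rho15 d := by
  subst h
  unfold E8T.rho15
  repeat' first
    | with_reducible apply H.add
    | with_reducible apply H.sub
    | with_reducible apply H.mul
    | with_reducible apply H.pow
    | with_reducible apply H.neg
    | with_reducible apply H.num
    | with_reducible apply H.tt
    | with_reducible apply H.uu
    | with_reducible apply H.g3
    | with_reducible apply H.g4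
    | with_reducible apply H.g5
    | with_reducible apply H.g6
    | with_reducible apply H.g9
    | with_reducible apply H.g10
    | with_reducible apply H.g15
    | with_reducible apply H.c
    | rfl

theorem H.rho18 {d : ℕ} (h : 18 = d) : H rho18 d := by
  subst h
  unfold E8T.rho18
  repeat' first
    | with_reducible apply H.add
    | with_reducible apply H.sub
    | with_reducible apply H.mul
    | with_reducible apply H.pow
    | with_reducible apply H.neg
    | with_reducible apply H.num
    | with_reducible apply H.tt
    | with_reducible apply H.uu
    | with_reducible apply H.g3
    | with_reducible apply H.g4
    | with_reducible apply H.g5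
    | with_reducible apply H.g6
    | with_reducible apply H.g9
    | with_reducible apply H.g10
    | with_reducible apply H.g15
    | with_reducible apply H.c
    | rfl

theorem H.v {d : ℕ} (h : 6 = d) : H v d := by
  subst h
  unfold E8T.v
  repeat' first
    | with_reducible apply H.add
    | with_reducible apply H.sub
    | with_reducible apply H.mul
    | with_reducible apply H.pow
    | with_reducible apply H.neg
    | with_reducible apply H.num
    | with_reducible apply H.tt
    | with_reducible apply H.uu
    | with_reducible apply H.g3
    | with_reducible apply H.g4
    | with_reducible apply H.g5
    | with_reducible apply H.g6
    | with_reducible apply H.g9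
    | with_reducible apply H.g10
    | with_reducible apply H.g15
    | with_reducible apply H.c
    | rfl

theorem H.w {d : ℕ} (h : 10 = d) : H w d := by
  subst h
  unfold E8T.w
  repeat' first
    | with_reducible apply H.add
    | with_reducible apply H.sub
    | with_reducible apply H.mul
    | with_reducible apply H.pow
    | with_reducible apply H.neg
    | with_reducible apply H.num
    | with_reducible apply H.tt
    | with_reducible apply H.uu
    | with_reducible apply H.g3
    | with_reducible apply H.g4
    | with_reducible apply H.g5
    | with_reducible apply H.g6
    | with_reducible apply H.g9
    | with_reducible apply H.g10
    | with_reducible apply H.g15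
    | with_reducible apply H.c
    | rfl

theorem H.x {d : ℕ} (h : 15 = d) : H x d := by
  subst h
  unfold E8T.x
  repeat' first
    | with_reducible apply H.add
    | with_reducible apply H.sub
    | with_reducible apply H.mul
    | with_reducible apply H.pow
    | with_reducible apply H.neg
    | with_reducible apply H.num
    | with_reducible apply H.tt
    | with_reducible apply H.uu
    | with_reducible apply H.g3
    | with_reducible apply H.g4
    | with_reducible apply H.g5
    | with_reducible apply H.g6
    | with_reducible apply H.g9
    | with_reducible apply H.g10
    | with_reducible apply H.g15
    | with_reducible apply H.c
    | rfl

theorem H.rho20 {d : ℕ} (h : 20 = d) : H rho20 d := by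
  subst h
  unfold E8T.rho20
  repeat' first
    | with_reducible apply H.add
    | with_reducible apply H.sub
    | with_reducible apply H.mul
    | with_reducible apply H.pow
    | with_reducible apply H.neg
    | with_reducible apply H.num
    | with_reducible apply H.tt
    | with_reducible apply H.uu
    | with_reducible apply H.g3
    | with_reducible apply H.g4
    | with_reducible apply H.g5
    | with_reducible apply H.g6
    | with_reducible apply H.g9
    | with_reducible apply H.g10
    | with_reducible apply H.g15
    | with_reducible apply H.c
    | with_reducible apply H.v
    | with_reducible apply H.w
    | with_reducible apply H.x
    | rfl

theorem H.rho24 {d : ℕ} (h : 24 = d) : H rho24 d := by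
  subst h
  unfold E8T.rho24
  repeat' first
    | with_reducible apply H.add
    | with_reducible apply H.sub
    | with_reducible apply H.mul
    | with_reducible apply H.pow
    | with_reducible apply H.neg
    | with_reducible apply H.num
    | with_reducible apply H.tt
    | with_reducible apply H.uu
    | with_reducible apply H.g3
    | with_reducible apply H.g4
    | with_reducible apply H.g5
    | with_reducible apply H.g6
    | with_reducible apply H.g9
    | with_reducible apply H.g10
    | with_reducible apply H.g15
    | with_reducible apply H.c
    | with_reducible apply H.v
    | with_reducible apply H.w
    | with_reducible apply H.x
    | rfl

theorem H.rho30 {d : ℕ} (h : 30 = d) : H rho30 d := by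
  subst h
  unfold E8T.rho30
  repeat' first
    | with_reducible apply H.add
    | with_reducible apply H.sub
    | with_reducible apply H.mul
    | with_reducible apply H.pow
    | with_reducible apply H.neg
    | with_reducible apply H.num
    | with_reducible apply H.tt
    | with_reducible apply H.uu
    | with_reducible apply H.g3
    | with_reducible apply H.g4
    | with_reducible apply H.g5
    | with_reducible apply H.g6
    | with_reducible apply H.g9
    | with_reducible apply H.g10
    | with_reducible apply H.g15
    | with_reducible apply H.c
    | with_reducible apply H.v
    | with_reducible apply H.w
    | with_reducible apply H.x
    | rfl

end E8T

namespace E8T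
open scoped TensorProduct

theorem tors_zero {T : Type} [AddCommGroup T] [Module.Finite ℤ T] (hT : Module.IsTorsion ℤ T)
    (hp : ∀ p : ℕ, p.Prime → Subsingleton (ZMod p ⊗[ℤ] T)) : Subsingleton T := by
  have hdiv : ∀ p : ℕ, p.Prime → ∀ x : T, ∃ y : T, p • y = x := by
    intro p pp x
    have := hp p pp
    let e0 : (ℤ ⧸ Ideal.span {(p : ℤ)}) ≃ₗ[ℤ] ZMod p :=
      (Int.quotientSpanNatEquivZMod p).toAddEquiv.toIntLinearEquiv
    let e1 := TensorProduct.congr e0 (LinearEquiv.refl ℤ T)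
    let e2 := TensorProduct.quotTensorEquivQuotSMul T (Ideal.span {(p : ℤ)})
    have hs : Subsingleton (T ⧸ (Ideal.span {(p : ℤ)} • ⊤ : Submodule ℤ T)) :=
      (e2.symm.trans e1).toEquiv.subsingleton
    rw [Submodule.Quotient.subsingleton_iff] at hs
    have hx : x ∈ (Ideal.span {(p : ℤ)} • ⊤ : Submodule ℤ T) := by rw [hs]; trivial
    rw [Submodule.ideal_span_singleton_smul] at hx
    obtain ⟨y, -, hy⟩ := (Submodule.mem_smul_pointwise_iff_exists _ _ _).mp hx
    exact ⟨y, by rw [← hy, natCast_zsmul]⟩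
  have hall : ∀ n : ℕ, n ≠ 0 → ∀ x : T, ∃ y : T, n • y = x := by
    intro n
    induction n using induction_on_primes with
    | zero => intro h; exact absurd rfl h
    | one => intro _ x; exact ⟨x, one_smul _ x⟩
    | prime_mul p a pp ih =>
      intro h x
      obtain ⟨y, rfl⟩ := hdiv p pp x
      obtain ⟨z, rfl⟩ := ih (by rintro rfl; simp at h) y
      exact ⟨z, mul_smul _ _ _⟩
  obtain ⟨s, hs⟩ := (Module.Finite.fg_top : (⊤ : Submodule ℤ T).FG)
  choose a ha using fun x : T => hT (x := x)
  have hn : ∀ x : T, (∏ y ∈ s, (a y : ℤ)) • x = 0 := by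
    intro x
    have hx : x ∈ Submodule.span ℤ (s : Set T) := by rw [hs]; trivial
    induction hx using Submodule.span_induction with
    | mem x hx =>
      obtain ⟨c, hc⟩ := Finset.dvd_prod_of_mem (fun y => (a y : ℤ)) hx
      rw [hc, mul_comm, mul_smul]
      have := ha x
      rw [Submonoid.smul_def] at this
      rw [this, smul_zero]
    | zero => simp
    | add x y _ _ h1 h2 => rw [smul_add, h1, h2, add_zero]
    | smul c x _ h => rw [smul_comm, h, smul_zero]
  have hne : (∏ y ∈ s, (a y : ℤ)) ≠ 0 :=
    Finset.prod_ne_zero_iff.mpr fun y _ => nonZeroDivisors.coe_ne_zero (a y)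
  refine ⟨fun x y => ?_⟩
  have hz : ∀ x : T, x = 0 := by
    intro x
    obtain ⟨y, rfl⟩ := hall _ (Int.natAbs_ne_zero.mpr hne) x
    have h := hn y
    rcases Int.natAbs_eq (∏ y ∈ s, (a y : ℤ)) with h' | h' <;> rw [h'] at h
    · rwa [natCast_zsmul] at h
    · rwa [neg_smul, neg_eq_zero, natCast_zsmul] at h
  rw [hz x, hz y]

theorem free_of_fibers {M : Type} [AddCommGroup M] [Module.Finite ℤ M] (N : ℕ)
    (h0 : Module.finrank ℚ (ℚ ⊗[ℤ] M) = N)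
    (hp : ∀ (p : ℕ) [Fact p.Prime], Module.finrank (ZMod p) (ZMod p ⊗[ℤ] M) = N) :
    Module.Free ℤ M ∧ Module.finrank ℤ M = N := by
  let T := Submodule.torsion ℤ M
  have : Module.Free ℤ (M ⧸ T) := inferInstance
  obtain ⟨f, hf⟩ := Module.projective_lifting_property _ LinearMap.id T.mkQ_surjective
  have e : (T × (M ⧸ T)) ≃ₗ[ℤ] M :=
    lequivProdOfRightSplitExact T.injective_subtype
      (by rw [Submodule.range_subtype, Submodule.ker_mkQ]) hf
  have hK : ∀ (K : Type) [Field K], Module.finrank K (K ⊗[ℤ] T) + Module.finrank ℤ (M ⧸ T) =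
      Module.finrank K (K ⊗[ℤ] M) := by
    intro K _
    rw [← (LinearEquiv.baseChange ℤ K _ _ e).finrank_eq,
      (TensorProduct.prodRight ℤ K K T (M ⧸ T)).finrank_eq, Module.finrank_prod,
      Module.finrank_baseChange (R := K) (S := ℤ) (M' := M ⧸ T)]
  have hQ : Subsingleton (ℚ ⊗[ℤ] T) := by
    refine ⟨fun a b => ?_⟩
    have hz : ∀ z : ℚ ⊗[ℤ] T, z = 0 := by
      intro z
      induction z using TensorProduct.induction_on with
      | zero => rfl
      | add x y hx hy => rw [hx, hy, add_zero]
      | tmul q y =>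
        obtain ⟨a, ha⟩ := Submodule.torsion_isTorsion (R := ℤ) (M := M) (x := y)
        have ha0 : (a : ℤ) ≠ 0 := nonZeroDivisors.coe_ne_zero a
        have : q = (a : ℤ) • (q / ((a : ℤ) : ℚ)) := by
          rw [zsmul_eq_mul]
          field_simp
        rw [this, TensorProduct.smul_tmul]
        rw [Submonoid.smul_def] at ha
        rw [ha, TensorProduct.tmul_zero]
    rw [hz a, hz b]
  have hr : Module.finrank ℤ (M ⧸ T) = N := by
    rw [← h0, ← hK ℚ, Module.finrank_zero_of_subsingleton (R := ℚ) (M := ℚ ⊗[ℤ] T), zero_add]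
  have hT : Subsingleton T := by
    apply tors_zero (Submodule.torsion_isTorsion (R := ℤ) (M := M))
    intro p pp
    have : Fact p.Prime := ⟨pp⟩
    have h1 := hK (ZMod p)
    rw [hp p, hr] at h1
    have h2 : Module.finrank (ZMod p) (ZMod p ⊗[ℤ] T) = 0 := by omega
    exact Module.finrank_zero_iff.mp h2
  have hU : Unique T := Unique.mk' T
  have e' : (M ⧸ T) ≃ₗ[ℤ] M := (LinearEquiv.prodUnique.symm.trans
    (LinearEquiv.prodComm ℤ _ _)).trans e
  exact ⟨Module.Free.of_equiv e', by rw [← e'.finrank_eq, hr]⟩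

end E8T

namespace E8T
open scoped TensorProduct

/-- The relations as a family. -/
noncomputable def rel : Fin 16 → P :=
  ![rho1, rho2, rho3, rho4, rho5, rho6, rho8, rho9, rho10, rho12,
    rho14, rho15, rho18, rho20, rho24, rho30]

/-- The degrees of the relations. -/
def dg : Fin 16 → ℕ := ![1, 2, 3, 4, 5, 6, 8, 9, 10, 12, 14, 15, 18, 20, 24, 30]

theorem relIdeal_eq : relIdeal = Ideal.span (Set.range rel) := by
  unfold relIdeal rel
  simp only [Matrix.range_cons, Matrix.range_empty, Set.union_empty, Set.singleton_union]

theorem rel_hom (i : Fin 16) : IsWeightedHomogeneous wt (rel i) (dg i) := by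
  fin_cases i
  · exact H.rho1 rfl
  · exact H.rho2 rfl
  · exact H.rho3 rfl
  · exact H.rho4 rfl
  · exact H.rho5 rfl
  · exact H.rho6 rfl
  · exact H.rho8 rfl
  · exact H.rho9 rfl
  · exact H.rho10 rfl
  · exact H.rho12 rfl
  · exact H.rho14 rfl
  · exact H.rho15 rfl
  · exact H.rho18 rfl
  · exact H.rho20 rfl
  · exact H.rho24 rfl
  · exact H.rho30 rfl

theorem fib (K : Type) [Field K] :
    Module.finrank K (MvPolynomial (Fin 16) K ⧸
      relIdeal.map (MvPolynomial.map (algebraMap ℤ K))) = 696729600 := by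
  have h1 : relIdeal.map (MvPolynomial.map (algebraMap ℤ K)) =
      Ideal.span (Set.range fun i => MvPolynomial.map (algebraMap ℤ K) (rel i)) := by
    rw [relIdeal_eq, Ideal.map_span, ← Set.range_comp]
    rfl
  have hrad : ∀ i, X i ∈ (relIdeal.map (MvPolynomial.map (algebraMap ℤ K))).radical := by
    intro i
    rw [Ideal.radical_eq_sInf, Submodule.mem_sInf]
    rintro J ⟨hJ, hJp⟩
    have := core ((Ideal.Quotient.mk J).comp (MvPolynomial.map (algebraMap ℤ K)))
      (fun p hp => Ideal.Quotient.eq_zero_iff_mem.mpr (hJ (Ideal.mem_map_of_mem _ hp))) i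
    rw [RingHom.comp_apply, map_X] at this
    exact Ideal.Quotient.eq_zero_iff_mem.mp this
  rw [h1] at hrad ⊢
  have h := finrank_mul wt (by intro i; fin_cases i <;> decide) _ dg
    (by intro i; fin_cases i <;> decide)
    (fun i => by
      intro m hm
      apply rel_hom i
      intro h0
      apply hm
      rw [coeff_map, h0, map_zero]) hrad
  have e1 : ∏ i, wt i = 486000 * 1 := by decide +kernel
  have e2 : ∏ i, dg i = 486000 * 696729600 := by decide +kernel
  rw [e1, e2] at h
  omega

theorem tensor_fib (K : Type) [Field K] :
    Module.finrank K (K ⊗[ℤ] (P ⧸ relIdeal)) = 696729600 := by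
  rw [← fib K]
  let e1 := Algebra.TensorProduct.tensorQuotientEquiv (R := ℤ) K P K relIdeal
  have hI : relIdeal.map (MvPolynomial.map (algebraMap ℤ K)) =
      (relIdeal.map (Algebra.TensorProduct.includeRight (A := K) (R := ℤ) (B := P))).map
        (algebraTensorAlgEquiv (σ := Fin 16) ℤ K : K ⊗[ℤ] P →+* MvPolynomial (Fin 16) K) := by
    have h := Ideal.map_map (I := relIdeal)
      (Algebra.TensorProduct.includeRight (A := K) (R := ℤ) (B := P)).toRingHom
      (algebraTensorAlgEquiv (σ := Fin 16) ℤ K : K ⊗[ℤ] P →+* MvPolynomial (Fin 16) K)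
    have hc : (algebraTensorAlgEquiv (σ := Fin 16) ℤ K :
        K ⊗[ℤ] P →+* MvPolynomial (Fin 16) K).comp
        (Algebra.TensorProduct.includeRight (A := K) (R := ℤ) (B := P)).toRingHom =
        MvPolynomial.map (algebraMap ℤ K) := by
      apply RingHom.ext
      intro p
      change algebraTensorAlgEquiv ℤ K (1 ⊗ₜ p) = _
      rw [algebraTensorAlgEquiv_tmul, one_smul]
    rw [hc] at h
    exact h.symm
  let e2 := Ideal.quotientEquivAlg _ _ (algebraTensorAlgEquiv (σ := Fin 16) ℤ K) hI
  exact (e1.toLinearEquiv.trans e2.toLinearEquiv).finrank_eq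

theorem fin_quot : Module.Finite ℤ (P ⧸ relIdeal) := by
  have hnil : ∀ i, IsIntegral ℤ (Ideal.Quotient.mk relIdeal (X i)) := by
    intro i
    have hi : X i ∈ relIdeal.radical := by
      rw [Ideal.radical_eq_sInf, Submodule.mem_sInf]
      rintro J ⟨hJ, hJp⟩
      have := core (Ideal.Quotient.mk J)
        (fun p hp => Ideal.Quotient.eq_zero_iff_mem.mpr (hJ hp)) i
      exact Ideal.Quotient.eq_zero_iff_mem.mp this
    obtain ⟨n, hn⟩ := hi
    refine ⟨Polynomial.X ^ n, Polynomial.monic_X_pow n, ?_⟩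
    rw [Polynomial.eval₂_X_pow, ← map_pow, Ideal.Quotient.eq_zero_iff_mem]
    exact hn
  have hfg := fg_adjoin_of_finite (R := ℤ)
    (Set.finite_range fun i => Ideal.Quotient.mk relIdeal (X i))
    (by rintro _ ⟨i, rfl⟩; exact hnil i)
  have htop : Algebra.adjoin ℤ (Set.range fun i => Ideal.Quotient.mk relIdeal (X i)) = ⊤ := by
    have h1 := congrArg (Subalgebra.map (Ideal.Quotient.mkₐ ℤ relIdeal))
      (MvPolynomial.adjoin_range_X (R := ℤ) (σ := Fin 16))
    rw [AlgHom.map_adjoin, ← Set.range_comp, Algebra.map_top,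
      (AlgHom.range_eq_top _).mpr (Ideal.Quotient.mkₐ_surjective ℤ relIdeal)] at h1
    exact h1
  rw [htop] at hfg
  exact ⟨hfg⟩

end E8T

/-- `P/I` is a free `ℤ`-module of rank `696729600 = |W(E₈)|`
(the integral cohomology ring `H^*(E₈/T; ℤ)` is free abelian of rank
`|W(E₈)|`). -/
theorem free_rank_E8T :
    Module.Free ℤ (E8T.P ⧸ E8T.relIdeal) ∧
    Module.rank ℤ (E8T.P ⧸ E8T.relIdeal) = 696729600 := by
  have := E8T.fin_quot
  obtain ⟨h1, h2⟩ := E8T.free_of_fibers (M := E8T.P ⧸ E8T.relIdeal) 696729600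
    (E8T.tensor_fib ℚ) (fun p _ => E8T.tensor_fib (ZMod p))
  refine ⟨h1, ?_⟩
  rw [← Module.finrank_eq_rank, h2]
  norm_cast
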